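/- arXiv:2504.05678 — 2 statements merged into one kernel-verified Lean document; each statement's English description precedes it below -/
import Mathlib

section
/- Let n ≥ 3 and let D be a rich domain of preferences (path-connected and containing a pair of completely reversed preferences). Then there exists an efficient, individually rational and obviously strategy-proof rule f : D^n → M satisfying equity under unanimous acclaim if and only if D is a single-peaked domain, i.e., there is a linear order < on the set of objects O such that every preference in D is single-peaked with respect to <. -/
/-!
Necessity. Under an obviously strategy-proof rule, on any product of subdomains where the rule
is not constant some agent acts first, so that her types split into classes such that any
outcome of a type is at least as good, for that type, as any outcome of a type from another
class (`osp_split`). This is impossible if every agent has a type from which no other type can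
be separated (`not_osp_of_conflict`). Order the objects by one of the two reversed preferences
and suppose that some preference ranks the middle one `y` of `x`, `y`, `z` last among them.
Path-connectedness supplies a preference with top `y` and, for every object, one making its
owner null. Restricted to the three objects and up to renaming them, the domain then contains
either a Condorcet cycle `cba`, `acb`, `bac` or the preferences `abc`, `cba`, `acb`, `bca`. When
all other agents are null, equity and individual rationality (`acclaim_three`) pin down enough
outcomes to produce such inseparable types (`no_condorcet`, `no_two_reversed`). So a middle
object is never worst, which is single-peakedness (`isSPDomain_of_rule`).

Sufficiency. The rule is the crawler. Agents are lined up along the order with their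
endowments. The first agent, from below, whose best remaining object is not above the object
she holds leaves with that best object, and the agents in between crawl up by one object.
Asking these agents about one object at a time gives an extensive form, encoded as a tree of
yes/no questions (`QTree`), for which obvious dominance of truth-telling is a condition checked
node by node (`QTree.osp_eval`). An agent who does not leave prefers moving up, so the object
she holds only improves, and this is what makes truth-telling obviously dominant and the rule
individually rational (`crawl_good`). Leavers take their best remaining object, so the outcome
is efficient (`eval_crawl_eff`). For equity, an acclaimed agent aiming at a lower object takes
it when only null agents have left, and one aiming at a higher object crawls up past the active
agents, each of whom leaves once the acclaimed agent holds the object just below hers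
(`crawl_equity_left`, `crawl_equity_right`).
-/

/-- A preference is a strict linear order on the objects `Fin n`, encoded by its
rank function: `p o < p o'` means object `o` is strictly preferred to `o'`. -/
abbrev Pref (n : ℕ) := Fin n ≃ Fin n

/-- `o` is strictly preferred to `o'` under `p`. -/
def prefers {n : ℕ} (p : Pref n) (o o' : Fin n) : Prop := p o < p o'

/-- `o` is weakly preferred to `o'` under `p` (i.e. `o P o'` or `o = o'`). -/
def weakPref {n : ℕ} (p : Pref n) (o o' : Fin n) : Prop := p o ≤ p o'

/-- The top-ranked object `r_1(p)`. -/
def topObj {n : ℕ} [NeZero n] (p : Pref n) : Fin n := p.symm 0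

/-- The second-ranked object `r_2(p)`. -/
def secondObj {n : ℕ} [NeZero n] (p : Pref n) : Fin n := p.symm 1

/-- The `p`-best object of a (nonempty) finite set `S`: `max^p S`. -/
noncomputable def best {n : ℕ} [NeZero n] (p : Pref n) (S : Finset (Fin n)) : Fin n :=
  (S.toList.argmin (fun o => p o)).getD 0

/-- A profile belongs to the domain `D` coordinatewise. -/
def inD {n : ℕ} (D : Set (Pref n)) (P : Fin n → Pref n) : Prop := ∀ i, P i ∈ D

/-- Individual rationality of an allocation at a profile: each agent `i` weakly
prefers her assigned object to her endowment `o_i = i`. -/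
def IRAt {n : ℕ} (P : Fin n → Pref n) (m : Fin n → Fin n) : Prop :=
  ∀ i, weakPref (P i) (m i) i

/-- `m'` Pareto dominates `m` at profile `P`. -/
def ParetoDom {n : ℕ} (P : Fin n → Pref n) (m' m : Fin n → Fin n) : Prop :=
  (∀ i, weakPref (P i) (m' i) (m i)) ∧ ∃ j, prefers (P j) (m' j) (m j)

/-- Pareto efficiency of an allocation at a profile. -/
def EffAt {n : ℕ} (P : Fin n → Pref n) (m : Fin n → Fin n) : Prop :=
  ¬ ∃ m' : Fin n → Fin n, Function.Bijective m' ∧ ParetoDom P m' m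

/-- A rule maps profiles from the domain to allocations (bijections `N → O`). -/
def IsRule {n : ℕ} (D : Set (Pref n)) (f : (Fin n → Pref n) → (Fin n → Fin n)) : Prop :=
  ∀ P, inD D P → Function.Bijective (f P)

def Efficient {n : ℕ} (D : Set (Pref n)) (f : (Fin n → Pref n) → (Fin n → Fin n)) : Prop :=
  ∀ P, inD D P → EffAt P (f P)

def IndRational {n : ℕ} (D : Set (Pref n)) (f : (Fin n → Pref n) → (Fin n → Fin n)) : Prop :=
  ∀ P, inD D P → IRAt P (f P)

def StrategyProof {n : ℕ} (D : Set (Pref n)) (f : (Fin n → Pref n) → (Fin n → Fin n)) : Prop :=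
  ∀ P, inD D P → ∀ i, ∀ p' ∈ D, weakPref (P i) (f P i) (f (Function.update P i p') i)

/-- The active agents at profile `P` (those whose top object differs from their
endowment); since `o_i = i`, the set of active objects coincides with it. -/
def activeAgents {n : ℕ} [NeZero n] (P : Fin n → Pref n) : Finset (Fin n) :=
  Finset.univ.filter (fun i => topObj (P i) ≠ i)

/-- Agent `i` is the acclaimed agent at profile `P`. -/
def acclaimed {n : ℕ} [NeZero n] (P : Fin n → Pref n) (i : Fin n) : Prop :=
  2 < (activeAgents P).card ∧ i ∈ activeAgents P ∧
    best (P i) (activeAgents P) ≠ i ∧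
    ∀ j ∈ activeAgents P, j ≠ i → best (P j) (activeAgents P) = i

/-- Equity under unanimous acclaim. -/
def EquityUA {n : ℕ} [NeZero n] (D : Set (Pref n))
    (f : (Fin n → Pref n) → (Fin n → Fin n)) : Prop :=
  ∀ P, inD D P → ∀ i, acclaimed P i → f P i = best (P i) (activeAgents P)

/-- Agents `i` and `j` form the acclaimed pair at profile `P`. -/
def acclaimedPair {n : ℕ} [NeZero n] (P : Fin n → Pref n) (i j : Fin n) : Prop :=
  ∃ Ni Nj : Finset (Fin n),
    Disjoint Ni Nj ∧ Ni ∪ Nj = activeAgents P ∧ Ni.card = Nj.card ∧ 1 < Ni.card ∧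
    i ∈ Nj ∧ j ∈ Ni ∧
    (∀ l ∈ Ni, best (P l) (activeAgents P) = i) ∧
    (∀ l ∈ Nj, best (P l) (activeAgents P) = j)

/-- Equity under bipartite acclaim. -/
def EquityBA {n : ℕ} [NeZero n] (D : Set (Pref n))
    (f : (Fin n → Pref n) → (Fin n → Fin n)) : Prop :=
  ∀ P, inD D P → ∀ i j, acclaimedPair P i j → f P i = j ∨ f P j = i

/-- Equity⁺ under bipartite acclaim. -/
def EquityPlusBA {n : ℕ} [NeZero n] (D : Set (Pref n))
    (f : (Fin n → Pref n) → (Fin n → Fin n)) : Prop :=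
  ∀ P, inD D P → ∀ i j, acclaimedPair P i j → f P i = j ∧ f P j = i

/-- Single-peakedness of `p` w.r.t. the linear order on objects encoded by the
position permutation `σ` (`o < o'` iff `σ o < σ o'`). -/
def singlePeaked {n : ℕ} [NeZero n] (σ : Fin n ≃ Fin n) (p : Pref n) : Prop :=
  ∀ o o' : Fin n,
    ((σ o' < σ o ∧ σ o < σ (topObj p)) ∨ (σ (topObj p) < σ o ∧ σ o < σ o')) →
    prefers p o o'

/-- The full single-peaked domain `D_<`. -/
def spDomain {n : ℕ} [NeZero n] (σ : Fin n ≃ Fin n) : Set (Pref n) :=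
  {p | singlePeaked σ p}

/-- `D` is a single-peaked domain. -/
def IsSPDomain {n : ℕ} [NeZero n] (D : Set (Pref n)) : Prop :=
  ∃ σ : Fin n ≃ Fin n, D ⊆ spDomain σ

/-- Objects `o` and `o'` are connected in `D`: `o ∼ o'`. -/
def connectedObj {n : ℕ} [NeZero n] (D : Set (Pref n)) (o o' : Fin n) : Prop :=
  ∃ p ∈ D, ∃ p' ∈ D, topObj p = o ∧ secondObj p = o' ∧ topObj p' = o' ∧ secondObj p' = o

/-- `D` is path-connected. -/
def pathConnected {n : ℕ} [NeZero n] (D : Set (Pref n)) : Prop :=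
  ∀ o o' : Fin n, o ≠ o' → ∃ l : List (Fin n),
    l.Nodup ∧ l.head? = some o ∧ l.getLast? = some o' ∧ l.Chain' (connectedObj D)

/-- `p` and `p'` rank all objects in exactly opposite orders. -/
def reversedPair {n : ℕ} (p p' : Pref n) : Prop :=
  ∀ o o', prefers p o o' ↔ prefers p' o' o

/-- A rich domain: path-connected and containing two completely reversed preferences. -/
def richDomain {n : ℕ} [NeZero n] (D : Set (Pref n)) : Prop :=
  pathConnected D ∧ ∃ p ∈ D, ∃ p' ∈ D, reversedPair p p'

/-- The restriction `→(x,y,z) ∈ R(D)`: whenever `x` is the best of `{x,y,z}`,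
`y` is ranked above `z`. -/
def RestrR {n : ℕ} [NeZero n] (D : Set (Pref n)) (x y z : Fin n) : Prop :=
  ∀ p ∈ D, best p {x, y, z} = x → prefers p y z

/-- The ternary relation `(x,y,z) ∈ B(D)`. -/
def RelB {n : ℕ} [NeZero n] (D : Set (Pref n)) (x y z : Fin n) : Prop :=
  RestrR D x y z ∧ RestrR D z y x

/-! ### Extensive game forms and obvious strategy-proofness -/

/-- An extensive game form: a finite rooted tree of histories (lists of actions,
prefix-closed), a player function and an outcome function on terminal histories. -/
structure GameForm (n : ℕ) where
  hist : Finset (List ℕ)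
  root_mem : [] ∈ hist
  prefix_closed : ∀ h a, h ++ [a] ∈ hist → h ∈ hist
  player : List ℕ → Fin n
  outcome : List ℕ → (Fin n → Fin n)

/-- A strategy chooses an action at every history. -/
abbrev Strategy : Type := List ℕ → ℕ

/-- Terminal histories of the game form. -/
def GameForm.Terminal {n : ℕ} (Γ : GameForm n) (h : List ℕ) : Prop :=
  h ∈ Γ.hist ∧ ∀ a, h ++ [a] ∉ Γ.hist

/-- A strategy of agent `i` is valid if it always chooses a feasible action. -/
def GameForm.ValidStrat {n : ℕ} (Γ : GameForm n) (i : Fin n) (s : Strategy) : Prop :=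
  ∀ h ∈ Γ.hist, ¬ Γ.Terminal h → Γ.player h = i → h ++ [s h] ∈ Γ.hist

/-- Play from `h` under the strategy profile `s` reaches history `h'`. -/
inductive GameForm.Reaches {n : ℕ} (Γ : GameForm n) (s : Fin n → Strategy) :
    List ℕ → List ℕ → Prop
  | refl (h : List ℕ) : GameForm.Reaches Γ s h h
  | step {h h' : List ℕ} : GameForm.Reaches Γ s h h' → h' ∈ Γ.hist → ¬ Γ.Terminal h' →
      GameForm.Reaches Γ s h (h' ++ [s (Γ.player h') h'])

/-- `o` belongs to the feasible set `X_i(h, s_i)` of agent `i` at history `h`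
given her strategy `si`. -/
def GameForm.Feas {n : ℕ} (Γ : GameForm n) (i : Fin n) (h : List ℕ) (si : Strategy)
    (o : Fin n) : Prop :=
  ∃ s : Fin n → Strategy, (∀ j, Γ.ValidStrat j (s j)) ∧ s i = si ∧
    ∃ t, Γ.Reaches s h t ∧ Γ.Terminal t ∧ Γ.outcome t i = o

/-- `h` is a decision node of `i` reachable (on-path) when `i` plays `si`. -/
def GameForm.ReachableNode {n : ℕ} (Γ : GameForm n) (i : Fin n) (si : Strategy)
    (h : List ℕ) : Prop :=
  h ∈ Γ.hist ∧ ¬ Γ.Terminal h ∧ Γ.player h = i ∧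
    ∃ s : Fin n → Strategy, (∀ j, Γ.ValidStrat j (s j)) ∧ s i = si ∧ Γ.Reaches s [] h

/-- `si` obviously dominates `si'` at preference `p`: at every earliest point of
departure, the worst feasible outcome under `si` is weakly preferred to the best
feasible outcome under `si'`. -/
def GameForm.ObvDom {n : ℕ} (Γ : GameForm n) (i : Fin n) (p : Pref n)
    (si si' : Strategy) : Prop :=
  ∀ h, Γ.ReachableNode i si h → Γ.ReachableNode i si' h → si h ≠ si' h →
    ∀ o o', Γ.Feas i h si o → Γ.Feas i h si' o' → weakPref p o o'

/-- Obvious strategy-proofness of a rule `f` on domain `D`. -/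
def OSP {n : ℕ} (D : Set (Pref n)) (f : (Fin n → Pref n) → (Fin n → Fin n)) : Prop :=
  ∃ (Γ : GameForm n) (S : Fin n → Pref n → Strategy),
    (∀ i p, p ∈ D → Γ.ValidStrat i (S i p)) ∧
    (∀ i p, p ∈ D → ∀ s', Γ.ValidStrat i s' → Γ.ObvDom i p (S i p) s') ∧
    (∀ P : Fin n → Pref n, inD D P →
      ∃ t, Γ.Reaches (fun j => S j (P j)) [] t ∧ Γ.Terminal t ∧ Γ.outcome t = f P)

/-! ### The crawler, the designator, and top trading cycles -/

/-- The running state of the crawler/designator algorithms: the sub-allocation of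
objects currently held by remaining agents, and the final assignments so far. -/
structure AlgState (n : ℕ) where
  held : Fin n → Option (Fin n)
  res : Fin n → Option (Fin n)

/-- The object currently held by agent `i`. -/
def heldObj {n : ℕ} [NeZero n] (st : AlgState n) (i : Fin n) : Fin n := (st.held i).getD 0

/-- The remaining agents. -/
def remAgents {n : ℕ} (st : AlgState n) : Finset (Fin n) :=
  Finset.univ.filter (fun i => (st.held i).isSome)

/-- The remaining objects. -/
def remObjs {n : ℕ} [NeZero n] (st : AlgState n) : Finset (Fin n) :=
  (remAgents st).image (heldObj st)

/-- The object of `S` adjacently larger than `o` w.r.t. the order `σ`. -/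
noncomputable def adjLarger {n : ℕ} (σ : Fin n ≃ Fin n) (S : Finset (Fin n)) (o : Fin n) : Fin n :=
  ((S.filter (fun o' => σ o < σ o')).toList.argmin (fun o' => σ o')).getD o

/-- The agent `i^s` leaving at the current step: the remaining agent holding the
`σ`-smallest object among those whose best remaining object is weakly below their
held object. -/
noncomputable def leaver {n : ℕ} [NeZero n] (σ : Fin n ≃ Fin n) (P : Fin n → Pref n)
    (st : AlgState n) : Option (Fin n) :=
  ((remAgents st).filter
      (fun i => σ (best (P i) (remObjs st)) ≤ σ (heldObj st i))).toList.argmin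
    (fun i => σ (heldObj st i))

/-- One step of the crawler: the leaving agent takes her best remaining object,
and every remaining agent holding an object weakly above the taken object and
strictly below the leaver's object crawls to the adjacently larger object. -/
noncomputable def crawlerStep {n : ℕ} [NeZero n] (σ : Fin n ≃ Fin n) (P : Fin n → Pref n)
    (st : AlgState n) : AlgState n :=
  match leaver σ P st with
  | none => st
  | some is =>
    let taken := best (P is) (remObjs st)
    { held := fun j =>
        if j = is then none
        else if (st.held j).isSome = true ∧ σ taken ≤ σ (heldObj st j) ∧
            σ (heldObj st j) < σ (heldObj st is) then
          some (adjLarger σ (remObjs st) (heldObj st j))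
        else st.held j,
      res := Function.update st.res is (some taken) }

/-- Initially every agent holds her endowment `o_i = i`. -/
def crawlerInit (n : ℕ) : AlgState n := ⟨fun i => some i, fun _ => none⟩

/-- The crawler rule w.r.t. the object order `σ`. -/
noncomputable def crawler {n : ℕ} [NeZero n] (σ : Fin n ≃ Fin n) (P : Fin n → Pref n) :
    Fin n → Fin n :=
  fun i => (((crawlerStep σ P)^[n] (crawlerInit n)).res i).getD 0

/-- `τ(i)`: the active agent whose endowment is `max^{P_i} O_{m̄⁰}`. -/
noncomputable def desTau {n : ℕ} [NeZero n] (P : Fin n → Pref n) (i : Fin n) : Fin n :=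
  best (P i) (activeAgents P)

/-- Stage I of the designator: null agents receive their endowments and leave. -/
def desInit {n : ℕ} [NeZero n] (P : Fin n → Pref n) : AlgState n :=
  { held := fun i => if topObj (P i) = i then none else some i,
    res := fun i => if topObj (P i) = i then some i else none }

/-- One step of Stage II of the designator: the leaving agent `i^s` takes her best
remaining object; if `τ(i^s)` is remaining and holds an object weakly above the
taken object and strictly below `i^s`'s held object, then `τ(i^s)` directly
inherits `i^s`'s object and only agents below `τ(i^s)` crawl (designating);
otherwise the crawling updating applies. -/
noncomputable def desStep {n : ℕ} [NeZero n] (σ : Fin n ≃ Fin n) (P : Fin n → Pref n)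
    (st : AlgState n) : AlgState n :=
  match leaver σ P st with
  | none => st
  | some is =>
    let taken := best (P is) (remObjs st)
    let t := desTau P is
    if (st.held t).isSome = true ∧ σ taken ≤ σ (heldObj st t) ∧
        σ (heldObj st t) < σ (heldObj st is) then
      { held := fun j =>
          if j = is then none
          else if j = t then some (heldObj st is)
          else if (st.held j).isSome = true ∧ σ taken ≤ σ (heldObj st j) ∧
              σ (heldObj st j) < σ (heldObj st t) then
            some (adjLarger σ (remObjs st) (heldObj st j))
          else st.held j,
        res := Function.update st.res is (some taken) }
    else
      { held := fun j =>
          if j = is then none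
          else if (st.held j).isSome = true ∧ σ taken ≤ σ (heldObj st j) ∧
              σ (heldObj st j) < σ (heldObj st is) then
            some (adjLarger σ (remObjs st) (heldObj st j))
          else st.held j,
        res := Function.update st.res is (some taken) }

/-- The designator rule w.r.t. the object order `σ`. -/
noncomputable def designator {n : ℕ} [NeZero n] (σ : Fin n ≃ Fin n) (P : Fin n → Pref n) :
    Fin n → Fin n :=
  fun i => (((desStep σ P)^[n] (desInit P)).res i).getD 0

/-- One round of top trading cycles: every remaining agent points to the owner of
her favorite remaining object (owner of object `o` is agent `o`), and every agent
lying on a pointing cycle receives the object she points to and leaves. -/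
noncomputable def ttcStep {n : ℕ} [NeZero n] (P : Fin n → Pref n) (res : Fin n → Option (Fin n)) :
    Fin n → Option (Fin n) :=
  let rem : Finset (Fin n) := Finset.univ.filter (fun i => res i = none)
  let pt : Fin n → Fin n := fun i => best (P i) rem
  fun i =>
    match res i with
    | some o => some o
    | none =>
      if (List.range (n + 1)).any (fun k => (k != 0) && (pt^[k] i == i)) then some (pt i)
      else none

/-- The top-trading-cycle rule. -/
noncomputable def ttc {n : ℕ} [NeZero n] (P : Fin n → Pref n) : Fin n → Fin n :=
  fun i => (((ttcStep P)^[n] (fun _ => none)) i).getD 0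

/-! ### Consequences of obvious strategy-proofness -/

lemma reaches_trans {n : ℕ} {Γ : GameForm n} {s : Fin n → Strategy} {a b c : List ℕ}
    (h : Γ.Reaches s a b) (h' : Γ.Reaches s b c) : Γ.Reaches s a c := by
  induction h' with
  | refl => exact h
  | step _ h1 h2 ih => exact ih.step h1 h2

lemma reaches_head {n : ℕ} {Γ : GameForm n} {s : Fin n → Strategy} {a b : List ℕ}
    (h : Γ.Reaches s a b) :
    a = b ∨ (a ∈ Γ.hist ∧ ¬ Γ.Terminal a ∧ Γ.Reaches s (a ++ [s (Γ.player a) a]) b) := by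
  induction h with
  | refl => exact Or.inl rfl
  | step _ h1 h2 ih =>
    right
    rcases ih with rfl | ⟨g1, g2, g3⟩
    · exact ⟨h1, h2, .refl _⟩
    · exact ⟨g1, g2, g3.step h1 h2⟩

/-- Play is deterministic, so two histories reached from the same history are comparable. -/
lemma reaches_total {n : ℕ} {Γ : GameForm n} {s : Fin n → Strategy} {a b c : List ℕ}
    (h : Γ.Reaches s a b) (h' : Γ.Reaches s a c) : Γ.Reaches s b c ∨ Γ.Reaches s c b := by
  induction h with
  | refl => exact Or.inl h'
  | step _ h1 h2 ih =>
    rcases ih with ih | ih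
    · rcases reaches_head ih with rfl | ⟨-, -, g⟩
      · exact Or.inr (.step (.refl _) h1 h2)
      · exact Or.inl g
    · exact Or.inr (ih.step h1 h2)

lemma reaches_terminal {n : ℕ} {Γ : GameForm n} {s : Fin n → Strategy} {a t c : List ℕ}
    (ht : Γ.Terminal t) (h : Γ.Reaches s a c) (h' : Γ.Reaches s a t) : Γ.Reaches s c t := by
  rcases reaches_total h h' with g | g
  · exact g
  · rcases reaches_head g with rfl | ⟨-, g, -⟩
    · exact .refl _
    · exact absurd ht g

/-- On any product of subdomains `T i ⊆ D` on which an obviously strategy-proof rule is not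
constant, consider the first history at which two types of the moving agent `i` act
differently. The action `g` taken there splits `T i`, and every type weakly prefers each of
its outcomes to each outcome of a type on another side of the split. -/
lemma osp_split {n : ℕ} {D : Set (Pref n)} {f : (Fin n → Pref n) → (Fin n → Fin n)}
    (hf : OSP D f) (T : Fin n → Set (Pref n)) (hT : ∀ i, T i ⊆ D)
    (hne : ∃ P P', (∀ i, P i ∈ T i) ∧ (∀ i, P' i ∈ T i) ∧ f P ≠ f P') :
    ∃ i, ∃ g : Pref n → ℕ, (∃ p ∈ T i, ∃ q ∈ T i, g p ≠ g q) ∧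
      ∀ P P', (∀ j, P j ∈ T j) → (∀ j, P' j ∈ T j) → g (P i) ≠ g (P' i) →
        weakPref (P i) (f P i) (f P' i) := by
  obtain ⟨Γ, S, hv, hd, ho⟩ := hf
  by_contra hcon
  push Not at hcon
  obtain ⟨P₀, P₁, hP₀, hP₁, hne⟩ := hne
  have hin : ∀ P : Fin n → Pref n, (∀ i, P i ∈ T i) → inD D P := fun P h i => hT i (h i)
  have key : ∀ h, Γ.Reaches (fun j => S j (P₀ j)) [] h →
      ∀ P : Fin n → Pref n, (∀ i, P i ∈ T i) → Γ.Reaches (fun j => S j (P j)) [] h := by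
    intro h hr
    induction hr with
    | refl => intro P _; exact .refl _
    | @step h hr h1 h2 ih =>
      intro P hP
      have hconst : S (Γ.player h) (P₀ (Γ.player h)) h = S (Γ.player h) (P (Γ.player h)) h := by
        by_contra hdiff
        obtain ⟨Q, Q', hQ, hQ', hg, hw⟩ := hcon (Γ.player h) (fun p => S (Γ.player h) p h)
          ⟨_, hP₀ _, _, hP _, hdiff⟩
        obtain ⟨t, ht, htt, hto⟩ := ho Q (hin Q hQ)
        obtain ⟨t', ht', htt', hto'⟩ := ho Q' (hin Q' hQ')
        refine hw (hd _ _ (hin Q hQ _) (S _ (Q' (Γ.player h))) (hv _ _ (hin Q' hQ' _)) h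
          ⟨h1, h2, rfl, fun j => S j (Q j), fun j => hv _ _ (hin Q hQ j), rfl, ih Q hQ⟩
          ⟨h1, h2, rfl, fun j => S j (Q' j), fun j => hv _ _ (hin Q' hQ' j), rfl, ih Q' hQ'⟩
          hg _ _
          ⟨fun j => S j (Q j), fun j => hv _ _ (hin Q hQ j), rfl, t,
            reaches_terminal htt (ih Q hQ) ht, htt, by rw [hto]⟩
          ⟨fun j => S j (Q' j), fun j => hv _ _ (hin Q' hQ' j), rfl, t',
            reaches_terminal htt' (ih Q' hQ') ht', htt', by rw [hto']⟩)
      have := (ih P hP).step h1 h2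
      rw [hconst]
      exact this
  obtain ⟨t, ht, htt, hto⟩ := ho P₀ (hin _ hP₀)
  obtain ⟨t', ht', htt', hto'⟩ := ho P₁ (hin _ hP₁)
  have h1 := reaches_terminal htt' (key t ht P₁ hP₁) ht'
  rcases reaches_head h1 with rfl | ⟨-, h, -⟩
  · exact hne (hto.symm.trans hto')
  · exact h htt

/-- Types `p` and `q` of agent `i` are in conflict on the product `T` if `p` can get
something strictly worse than what `q` can get, as judged by `p`. -/
def Conflict {n : ℕ} (f : (Fin n → Pref n) → (Fin n → Fin n)) (T : Fin n → Set (Pref n))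
    (i : Fin n) (p q : Pref n) : Prop :=
  ∃ P P', (∀ j, P j ∈ T j) ∧ (∀ j, P' j ∈ T j) ∧ P i = p ∧ P' i = q ∧
    p (f P' i) < p (f P i)

/-- If every agent has a pivotal type in conflict with each other type, no agent can be the
first one to act, so the rule is not obviously strategy-proof. -/
lemma not_osp_of_conflict {n : ℕ} {D : Set (Pref n)}
    {f : (Fin n → Pref n) → (Fin n → Fin n)}
    (hf : OSP D f) (T : Fin n → Set (Pref n)) (hT : ∀ i, T i ⊆ D)
    (hne : ∃ P P', (∀ i, P i ∈ T i) ∧ (∀ i, P' i ∈ T i) ∧ f P ≠ f P')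
    (hc : ∀ i, ∃ p, ∀ q ∈ T i, q = p ∨ Conflict f T i p q ∨ Conflict f T i q p) : False := by
  obtain ⟨i, g, ⟨p, hp, q, hq, hpq⟩, hg⟩ := osp_split hf T hT hne
  obtain ⟨r, hr⟩ := hc i
  have key : ∀ q ∈ T i, g q = g r := by
    intro q hq
    by_contra hqr
    rcases hr q hq with rfl | ⟨P, P', hP, hP', rfl, rfl, hlt⟩ | ⟨P, P', hP, hP', rfl, rfl, hlt⟩
    · exact hqr rfl
    · exact absurd (hg P P' hP hP' (Ne.symm hqr)) (not_le.mpr hlt)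
    · exact absurd (hg P P' hP hP' hqr) (not_le.mpr hlt)
  exact hpq ((key p hp).trans (key q hq).symm)

/-! ### Three active agents -/

lemma best_spec {n : ℕ} [NeZero n] (p : Pref n) {S : Finset (Fin n)} (hS : S.Nonempty) :
    best p S ∈ S ∧ ∀ o ∈ S, p (best p S) ≤ p o := by
  unfold best
  cases h : S.toList.argmin (fun o => p o) with
  | none => simp [List.argmin_eq_none] at h; simp [h] at hS
  | some m =>
    have h' : m ∈ S.toList.argmin (fun o => p o) := h
    exact ⟨Finset.mem_toList.mp (List.argmin_mem h'),
      fun o ho => List.le_of_mem_argmin (Finset.mem_toList.mpr ho) h'⟩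

lemma best_eq {n : ℕ} [NeZero n] (p : Pref n) {S : Finset (Fin n)} {m : Fin n} (hm : m ∈ S)
    (h : ∀ o ∈ S, p m ≤ p o) : best p S = m := by
  have hb := best_spec p ⟨m, hm⟩
  exact p.injective (le_antisymm (hb.2 m hm) (h _ hb.1))

lemma top_le {n : ℕ} [NeZero n] (p : Pref n) (o : Fin n) : p (topObj p) ≤ p o := by
  simp [topObj]

/-- If all agents but `u, v, w` are null, `v` and `w` want `u` most and `u` wants `v` most,
then `u` receives `v`; if moreover `v` does not want `w`, then `u` and `v` swap. -/
lemma acclaim_three {n : ℕ} [NeZero n] {D : Set (Pref n)}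
    {f : (Fin n → Pref n) → (Fin n → Fin n)} (hr : IsRule D f) (hir : IndRational D f)
    (heq : EquityUA D f) {P : Fin n → Pref n} (hP : inD D P) {u v w : Fin n}
    (huv : u ≠ v) (huw : u ≠ w) (hvw : v ≠ w)
    (hnull : ∀ j, j ≠ u → j ≠ v → j ≠ w → topObj (P j) = j)
    (h1 : P v u < P v v) (h2 : P v u < P v w) (h3 : P w u < P w w) (h4 : P w u < P w v)
    (h5 : P u v < P u u) (h6 : P u v < P u w) :
    f P u = v ∧ (P v v < P v w → f P v = u ∧ f P w = w) := by
  have notop : ∀ j o, P j o < P j j → topObj (P j) ≠ j := by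
    intro j o h ht
    have := top_le (P j) o
    rw [ht] at this
    exact absurd h (not_lt.mpr this)
  have hact : activeAgents P = {u, v, w} := by
    ext j
    simp only [activeAgents, Finset.mem_filter, Finset.mem_univ, true_and, Finset.mem_insert,
      Finset.mem_singleton]
    constructor
    · intro h
      by_contra hcon
      push Not at hcon
      exact h (hnull j hcon.1 hcon.2.1 hcon.2.2)
    · rintro (rfl | rfl | rfl)
      · exact notop _ _ h5
      · exact notop _ _ h1
      · exact notop _ _ h3
  have bu : best (P u) {u, v, w} = v :=
    best_eq _ (by simp) (by simp [h5.le, h6.le])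
  have bv : best (P v) {u, v, w} = u :=
    best_eq _ (by simp) (by simp [h1.le, h2.le])
  have bw : best (P w) {u, v, w} = u :=
    best_eq _ (by simp) (by simp [h3.le, h4.le])
  have hacc : acclaimed P u := by
    unfold acclaimed
    rw [hact, bu]
    refine ⟨?_, by simp, huv.symm, ?_⟩
    · rw [Finset.card_eq_three.mpr ⟨u, v, w, huv, huw, hvw, rfl⟩]; norm_num
    · intro j hj hju
      simp only [Finset.mem_insert, Finset.mem_singleton] at hj
      rcases hj with rfl | rfl | rfl
      · exact absurd rfl hju
      · exact bv
      · exact bw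
  have hfu : f P u = v := by rw [heq P hP u hacc, hact, bu]
  refine ⟨hfu, fun h => ?_⟩
  have hinj := (hr P hP).injective
  have hfix : ∀ j, j ≠ u → j ≠ v → j ≠ w → f P j = j := by
    intro j a b c
    have h1 : P j (f P j) ≤ P j j := hir P hP j
    have h2 := top_le (P j) (f P j)
    rw [hnull j a b c] at h2
    exact (P j).injective (le_antisymm h1 h2)
  have hmem : ∀ j, j = u ∨ j = v ∨ j = w → f P j = u ∨ f P j = v ∨ f P j = w := by
    intro j hj
    by_contra hcon
    push Not at hcon
    have := hinj (hfix _ hcon.1 hcon.2.1 hcon.2.2)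
    rw [this] at hcon
    tauto
  have hv : P v (f P v) ≤ P v v := hir P hP v
  have hfv : f P v = u := by
    rcases hmem v (by tauto) with e | e | e
    · exact e
    · exact absurd (hinj (hfu.trans e.symm)) huv
    · rw [e] at hv; exact absurd h (not_lt.mpr hv)
  refine ⟨hfv, ?_⟩
  rcases hmem w (by tauto) with e | e | e
  · exact absurd (hinj (hfv.trans e.symm)) hvw
  · exact absurd (hinj (hfu.trans e.symm)) huw
  · exact e

/-- The product of types in which agents `a, b, c` have the types `Ta, Tb, Tc` and every
other agent `j` only the type `N j`. -/
def triT {n : ℕ} (N : Fin n → Pref n) (a b c : Fin n) (Ta Tb Tc : Set (Pref n)) :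
    Fin n → Set (Pref n) :=
  fun j => if j = a then Ta else if j = b then Tb else if j = c then Tc else {N j}

/-- The profile in which `a, b, c` report `x, y, z` and every other agent `j` reports `N j`. -/
def triP {n : ℕ} (N : Fin n → Pref n) (a b c : Fin n) (x y z : Pref n) : Fin n → Pref n :=
  fun j => if j = a then x else if j = b then y else if j = c then z else N j

lemma triP_mem {n : ℕ} (N : Fin n → Pref n) (a b c : Fin n) {Ta Tb Tc : Set (Pref n)}
    {x y z : Pref n} (hx : x ∈ Ta) (hy : y ∈ Tb) (hz : z ∈ Tc) (j : Fin n) :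
    triP N a b c x y z j ∈ triT N a b c Ta Tb Tc j := by
  unfold triP triT
  split_ifs <;> simp_all

/-- A Condorcet cycle `cba`, `acb`, `bac` is incompatible with equity. -/
lemma no_condorcet {n : ℕ} [NeZero n] {D : Set (Pref n)}
    {f : (Fin n → Pref n) → (Fin n → Fin n)} (hr : IsRule D f) (hir : IndRational D f)
    (heq : EquityUA D f) (hosp : OSP D f) (htop : ∀ o, ∃ p ∈ D, topObj p = o)
    {a b c : Fin n} {x y z : Pref n} (hx : x ∈ D) (hy : y ∈ D) (hz : z ∈ D)
    (x1 : x c < x b) (x2 : x b < x a) (y1 : y a < y c) (y2 : y c < y b)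
    (z1 : z b < z a) (z2 : z a < z c) : False := by
  choose N hN hNt using htop
  have hab : a ≠ b := by rintro rfl; exact absurd x2 (lt_irrefl _)
  have hbc : b ≠ c := by rintro rfl; exact absurd x1 (lt_irrefl _)
  have hac : a ≠ c := by rintro rfl; exact absurd y1 (lt_irrefl _)
  have x3 := x1.trans x2
  have y3 := y1.trans y2
  have z3 := z1.trans z2
  let T := triT N a b c {x, z} {y, x} {y, z}
  have hTD : ∀ i, T i ⊆ D := by
    intro i p hp
    simp only [T, triT] at hp
    split_ifs at hp <;> simp only [Set.mem_insert_iff, Set.mem_singleton_iff] at hp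
    · rcases hp with rfl | rfl <;> assumption
    · rcases hp with rfl | rfl <;> assumption
    · rcases hp with rfl | rfl <;> assumption
    · rw [hp]; exact hN i
  have hin : ∀ p q r, p ∈ D → q ∈ D → r ∈ D → inD D (triP N a b c p q r) := by
    intro p q r hp hq hr' j
    unfold triP; split_ifs <;> simp_all
  have pa : ∀ p q r, triP N a b c p q r a = p := by simp [triP]
  have pb : ∀ p q r, triP N a b c p q r b = q := by simp [triP, hab.symm]
  have pc : ∀ p q r, triP N a b c p q r c = r := by simp [triP, hac.symm, hbc.symm]
  have hnull : ∀ p q r j, j ≠ a → j ≠ b → j ≠ c → topObj (triP N a b c p q r j) = j := by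
    intro p q r j h1 h2 h3; simp [triP, h1, h2, h3, hNt]
  have e1 := acclaim_three hr hir heq (hin x x z hx hx hz) hbc.symm hac.symm hab.symm
    (fun j h1 h2 h3 => hnull _ _ _ j h3 h2 h1)
  have e2 := acclaim_three hr hir heq (hin z y z hz hy hz) hab.symm hbc hac
    (fun j h1 h2 h3 => hnull _ _ _ j h2 h1 h3)
  have e3 := acclaim_three hr hir heq (hin x y y hx hy hy) hac hab hbc.symm
    (fun j h1 h2 h3 => hnull _ _ _ j h1 h3 h2)
  have e4 := acclaim_three hr hir heq (hin x x y hx hx hy) hac.symm hbc.symm hab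
    (fun j h1 h2 h3 => hnull _ _ _ j h2 h3 h1)
  simp only [pa, pb, pc] at e1 e2 e3 e4
  obtain ⟨e1c, e1⟩ := e1 x1 x3 x3 x1 z3 z1 |>.imp_right (· x2)
  obtain ⟨e2b, e2⟩ := e2 z1 z3 z3 z1 y3 y1 |>.imp_right (· z2)
  obtain ⟨e3a, e3⟩ := e3 y1 y3 y3 y1 x3 x1 |>.imp_right (· y2)
  obtain ⟨e4c, -⟩ := e4 x3 x1 x1 x3 y1 y3
  have m1 := triP_mem N a b c (x := x) (y := x) (z := z) (Ta := {x, z}) (Tb := {y, x})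
    (Tc := {y, z}) (by simp) (by simp) (by simp)
  have m2 := triP_mem N a b c (x := z) (y := y) (z := z) (Ta := {x, z}) (Tb := {y, x})
    (Tc := {y, z}) (by simp) (by simp) (by simp)
  have m3 := triP_mem N a b c (x := x) (y := y) (z := y) (Ta := {x, z}) (Tb := {y, x})
    (Tc := {y, z}) (by simp) (by simp) (by simp)
  have m4 := triP_mem N a b c (x := x) (y := x) (z := y) (Ta := {x, z}) (Tb := {y, x})
    (Tc := {y, z}) (by simp) (by simp) (by simp)
  refine not_osp_of_conflict hosp T hTD ⟨_, _, m1, m4, ?_⟩ ?_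
  · intro h
    rw [h, e4c] at e1c
    exact hab e1c
  · intro i
    by_cases hia : i = a
    · subst hia
      refine ⟨x, fun q hq => ?_⟩
      simp only [T, triT, if_true, Set.mem_insert_iff, Set.mem_singleton_iff] at hq
      rcases hq with rfl | rfl
      · exact Or.inl rfl
      · exact Or.inr (Or.inl ⟨_, _, m1, m2, pa _ _ _, pa _ _ _, by rw [e1.2, e2.1]; exact x2⟩)
    by_cases hib : i = b
    · subst hib
      refine ⟨y, fun q hq => ?_⟩
      simp only [T, triT, hia, if_true, if_false, Set.mem_insert_iff,
        Set.mem_singleton_iff] at hq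
      rcases hq with rfl | rfl
      · exact Or.inl rfl
      · exact Or.inr (Or.inl ⟨_, _, m3, m1, pb _ _ _, pb _ _ _, by rw [e3.2, e1.1]; exact y2⟩)
    by_cases hic : i = c
    · subst hic
      refine ⟨z, fun q hq => ?_⟩
      simp only [T, triT, hia, hib, if_true, if_false, Set.mem_insert_iff,
        Set.mem_singleton_iff] at hq
      rcases hq with rfl | rfl
      · exact Or.inr (Or.inl ⟨_, _, m2, m4, pc _ _ _, pc _ _ _, by rw [e2.2, e4c]; exact z2⟩)
      · exact Or.inl rfl
    · refine ⟨N i, fun q hq => Or.inl ?_⟩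
      simpa [T, triT, hia, hib, hic] using hq

/-- The preferences `abc`, `cba`, `acb`, `bca` together are incompatible with equity. -/
lemma no_two_reversed {n : ℕ} [NeZero n] {D : Set (Pref n)}
    {f : (Fin n → Pref n) → (Fin n → Fin n)} (hr : IsRule D f) (hir : IndRational D f)
    (heq : EquityUA D f) (hosp : OSP D f) (htop : ∀ o, ∃ p ∈ D, topObj p = o)
    {a b c : Fin n} {x y z t : Pref n} (hx : x ∈ D) (hy : y ∈ D) (hz : z ∈ D) (ht : t ∈ D)
    (x1 : x a < x b) (x2 : x b < x c) (y1 : y c < y b) (y2 : y b < y a)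
    (z1 : z a < z c) (z2 : z c < z b) (t1 : t b < t c) (t2 : t c < t a) : False := by
  choose N hN hNt using htop
  have hab : a ≠ b := by rintro rfl; exact absurd x1 (lt_irrefl _)
  have hbc : b ≠ c := by rintro rfl; exact absurd x2 (lt_irrefl _)
  have hac : a ≠ c := by rintro rfl; exact absurd z1 (lt_irrefl _)
  have x3 := x1.trans x2
  have y3 := y1.trans y2
  have z3 := z1.trans z2
  have t3 := t1.trans t2
  let T := triT N a b c {y, t} {y, z, x} {t, x, z}
  have hTD : ∀ i, T i ⊆ D := by
    intro i p hp
    simp only [T, triT] at hp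
    split_ifs at hp <;> simp only [Set.mem_insert_iff, Set.mem_singleton_iff] at hp
    · rcases hp with rfl | rfl <;> assumption
    · rcases hp with rfl | rfl | rfl <;> assumption
    · rcases hp with rfl | rfl | rfl <;> assumption
    · rw [hp]; exact hN i
  have hin : ∀ p q r, p ∈ D → q ∈ D → r ∈ D → inD D (triP N a b c p q r) := by
    intro p q r hp hq hr' j
    unfold triP; split_ifs <;> simp_all
  have pa : ∀ p q r, triP N a b c p q r a = p := by simp [triP]
  have pb : ∀ p q r, triP N a b c p q r b = q := by simp [triP, hab.symm]
  have pc : ∀ p q r, triP N a b c p q r c = r := by simp [triP, hac.symm, hbc.symm]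
  have hnull : ∀ p q r j, j ≠ a → j ≠ b → j ≠ c → topObj (triP N a b c p q r j) = j := by
    intro p q r j h1 h2 h3; simp [triP, h1, h2, h3, hNt]
  have e1 := acclaim_three hr hir heq (hin y y t hy hy ht) hbc.symm hac.symm hab.symm
    (fun j h1 h2 h3 => hnull _ _ _ j h3 h2 h1)
  have e2 := acclaim_three hr hir heq (hin t x x ht hx hx) hab hac hbc
    (fun j h1 h2 h3 => hnull _ _ _ j h1 h2 h3)
  have e3 := acclaim_three hr hir heq (hin y z z hy hz hz) hac hab hbc.symm
    (fun j h1 h2 h3 => hnull _ _ _ j h1 h3 h2)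
  simp only [pa, pb, pc] at e1 e2 e3
  obtain ⟨e1c, e1⟩ := e1 y1 y3 y3 y1 t1 t3 |>.imp_right (· y2)
  obtain ⟨e2a, e2⟩ := e2 x1 x3 x3 x1 t3 t1 |>.imp_right (· x2)
  obtain ⟨e3a, e3⟩ := e3 z1 z3 z3 z1 y3 y1 |>.imp_right (· z2)
  have m1 := triP_mem N a b c (x := y) (y := y) (z := t) (Ta := {y, t}) (Tb := {y, z, x})
    (Tc := {t, x, z}) (by simp) (by simp) (by simp)
  have m2 := triP_mem N a b c (x := t) (y := x) (z := x) (Ta := {y, t}) (Tb := {y, z, x})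
    (Tc := {t, x, z}) (by simp) (by simp) (by simp)
  have m3 := triP_mem N a b c (x := y) (y := z) (z := z) (Ta := {y, t}) (Tb := {y, z, x})
    (Tc := {t, x, z}) (by simp) (by simp) (by simp)
  refine not_osp_of_conflict hosp T hTD ⟨_, _, m1, m2, ?_⟩ ?_
  · intro h
    have := e1.2
    rw [h, e2a] at this
    exact hab this.symm
  · intro i
    by_cases hia : i = a
    · subst hia
      refine ⟨y, fun q hq => ?_⟩
      simp only [T, triT, if_true, Set.mem_insert_iff, Set.mem_singleton_iff] at hq
      rcases hq with rfl | rfl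
      · exact Or.inl rfl
      · exact Or.inr (Or.inl ⟨_, _, m1, m2, pa _ _ _, pa _ _ _, by rw [e1.2, e2a]; exact y2⟩)
    by_cases hib : i = b
    · subst hib
      refine ⟨z, fun q hq => ?_⟩
      simp only [T, triT, hia, if_true, if_false, Set.mem_insert_iff,
        Set.mem_singleton_iff] at hq
      rcases hq with rfl | rfl | rfl
      · exact Or.inr (Or.inl ⟨_, _, m3, m1, pb _ _ _, pb _ _ _, by rw [e3.2, e1.1]; exact z2⟩)
      · exact Or.inl rfl
      · exact Or.inr (Or.inl ⟨_, _, m3, m2, pb _ _ _, pb _ _ _, by rw [e3.2, e2.1]; exact z3⟩)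
    by_cases hic : i = c
    · subst hic
      refine ⟨x, fun q hq => ?_⟩
      simp only [T, triT, hia, hib, if_true, if_false, Set.mem_insert_iff,
        Set.mem_singleton_iff] at hq
      rcases hq with rfl | rfl | rfl
      · exact Or.inr (Or.inl ⟨_, _, m2, m1, pc _ _ _, pc _ _ _, by rw [e2.2, e1c]; exact x2⟩)
      · exact Or.inl rfl
      · exact Or.inr (Or.inl ⟨_, _, m2, m3, pc _ _ _, pc _ _ _, by rw [e2.2, e3.1]; exact x3⟩)
    · refine ⟨N i, fun q hq => Or.inl ?_⟩
      simpa [T, triT, hia, hib, hic] using hq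

/-! ### Single-peakedness on triples -/

/-- Along `σ`, the middle one of three objects is never the worst. This is equivalent to
single-peakedness. -/
def MidNotWorst {n : ℕ} (σ : Fin n ≃ Fin n) (p : Pref n) : Prop :=
  ∀ x y z, σ x < σ y → σ y < σ z → p y < p x ∨ p y < p z

lemma singlePeaked.mid {n : ℕ} [NeZero n] {σ : Fin n ≃ Fin n} {p : Pref n}
    (h : singlePeaked σ p) : MidNotWorst σ p := by
  intro x y z hxy hyz
  rcases lt_trichotomy (σ y) (σ (topObj p)) with ht | ht | ht
  · exact Or.inl (h y x (Or.inl ⟨hxy, ht⟩))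
  · left
    have e := σ.injective ht
    have := top_le p x
    rw [← e] at this
    refine lt_of_le_of_ne this fun hh => ?_
    rw [p.injective hh] at hxy
    exact lt_irrefl _ hxy
  · exact Or.inr (h y z (Or.inr ⟨ht, hyz⟩))

lemma MidNotWorst.singlePeaked {n : ℕ} [NeZero n] {σ : Fin n ≃ Fin n} {p : Pref n}
    (h : MidNotWorst σ p) : singlePeaked σ p := by
  rintro o o' (⟨h1, h2⟩ | ⟨h1, h2⟩)
  · exact (h _ _ _ h1 h2).resolve_right (not_lt.mpr (top_le p o))
  · exact (h _ _ _ h1 h2).resolve_left (not_lt.mpr (top_le p o))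

lemma exists_top {n : ℕ} [NeZero n] (hn : 3 ≤ n) {D : Set (Pref n)} (h : pathConnected D)
    (o : Fin n) : ∃ p ∈ D, topObj p = o := by
  obtain ⟨o', ho⟩ : ∃ o' : Fin n, o ≠ o' := by
    have : Nontrivial (Fin n) := Fin.nontrivial_iff_two_le.mpr (by omega)
    obtain ⟨o', h⟩ := exists_ne o
    exact ⟨o', h.symm⟩
  obtain ⟨l, -, h1, h2, h3⟩ := h o o' ho
  match l, h1, h2, h3 with
  | [x], h1, h2, h3 =>
    simp at h1 h2
    exact absurd (h1.symm.trans h2) ho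
  | x :: y :: l, h1, h2, h3 =>
    simp at h1
    subst h1
    have hc : connectedObj D x y := by
      have h3' : List.IsChain (connectedObj D) (x :: y :: l) := h3
      rw [List.isChain_cons_cons] at h3'
      exact h3'.1
    obtain ⟨p, hp, -, -, ht, -⟩ := hc
    exact ⟨p, hp, ht⟩

/-- Existence of an equitable rule forces single-peakedness along either of the two reversed
preferences. -/
lemma isSPDomain_of_rule {n : ℕ} [NeZero n] (hn : 3 ≤ n) {D : Set (Pref n)}
    (hrich : richDomain D) {f : (Fin n → Pref n) → (Fin n → Fin n)} (hr : IsRule D f)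
    (hir : IndRational D f) (heq : EquityUA D f) (hosp : OSP D f) : IsSPDomain D := by
  obtain ⟨hpath, p, hp, p', hp', hrev⟩ := hrich
  have htop := exists_top hn hpath
  refine ⟨p, fun q hq => MidNotWorst.singlePeaked ?_⟩
  intro x y z h1 h2
  by_contra hcon
  push Not at hcon
  have hyx : y ≠ x := by rintro rfl; exact lt_irrefl _ h1
  have hyz : y ≠ z := by rintro rfl; exact lt_irrefl _ h2
  have hxz : x ≠ z := by rintro rfl; exact lt_asymm h1 h2
  have q1 : q x < q y := lt_of_le_of_ne hcon.1 (fun h => hyx (q.injective h).symm)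
  have q2 : q z < q y := lt_of_le_of_ne hcon.2 (fun h => hyz (q.injective h).symm)
  have r1 : p' y < p' x := (hrev x y).mp h1
  have r2 : p' z < p' y := (hrev y z).mp h2
  obtain ⟨t, ht, hty⟩ := htop y
  have t1 : t y < t x := by
    refine lt_of_le_of_ne (hty ▸ top_le t x) (fun h => hyx (t.injective h))
  have t2 : t y < t z := by
    refine lt_of_le_of_ne (hty ▸ top_le t z) (fun h => hyz (t.injective h))
  rcases lt_or_gt_of_ne (fun h => hxz (q.injective h)) with q3 | q3 <;>
  rcases lt_or_gt_of_ne (fun h => hxz (t.injective h)) with t3 | t3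
  · exact no_condorcet hr hir heq hosp htop hp' hq ht r2 r1 q3 q2 t1 t3
  · exact no_two_reversed hr hir heq hosp htop hp hp' hq ht h1 h2 r2 r1 q3 q2 t2 t3
  · exact no_two_reversed hr hir heq hosp htop hp' hp hq ht r2 r1 h1 h2 q3 q1 t1 t3
  · exact no_condorcet hr hir heq hosp htop hp hq ht h1 h2 q3 q1 t2 t3

/-! ### Mechanisms as trees of yes/no questions -/

/-- A mechanism in which, at each inner node, an agent `i` is asked whether her preference
satisfies `Q`; play continues in `y` if so and in `no` otherwise. -/
inductive QTree (n : ℕ) where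
  | leaf (m : Fin n → Fin n) : QTree n
  | ask (i : Fin n) (Q : Pref n → Prop) (y no : QTree n) : QTree n

namespace QTree

variable {n : ℕ}

open Classical in
/-- The allocation reached under truthful answers. -/
noncomputable def eval (P : Fin n → Pref n) : QTree n → Fin n → Fin n
  | leaf m => m
  | ask i Q y no => if Q (P i) then eval P y else eval P no

/-- `o` is assigned to `i` at some leaf. -/
def All (i : Fin n) (o : Fin n) : QTree n → Prop
  | leaf m => m i = o
  | ask _ _ y no => All i o y ∨ All i o no

open Classical in
/-- `o` is assigned to `i` at some leaf consistent with `i` answering according to `p`. -/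
def Out (i : Fin n) (p : Pref n) (o : Fin n) : QTree n → Prop
  | leaf m => m i = o
  | ask j Q y no =>
    if j = i then (if Q p then Out i p o y else Out i p o no) else Out i p o y ∨ Out i p o no

/-- Answering according to `p` is obviously dominant for `i` at every node that these answers
leave reachable. -/
def Good (i : Fin n) (p : Pref n) : QTree n → Prop
  | leaf _ => True
  | ask j Q y no =>
    if j = i then
      (Q p → Good i p y ∧ ∀ o o', Out i p o y → All i o' no → p o ≤ p o') ∧
      (¬ Q p → Good i p no ∧ ∀ o o', Out i p o no → All i o' y → p o ≤ p o')
    else Good i p y ∧ Good i p no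

lemma Out.all {i : Fin n} {p : Pref n} {o : Fin n} {t : QTree n} (h : Out i p o t) :
    All i o t := by
  induction t with
  | leaf m => exact h
  | ask j Q y no ih1 ih2 =>
    simp only [Out] at h
    split_ifs at h
    · exact Or.inl (ih1 h)
    · exact Or.inr (ih2 h)
    · exact h.imp ih1 ih2

lemma out_eval (P : Fin n → Pref n) (i : Fin n) (t : QTree n) :
    Out i (P i) (eval P t i) t := by
  induction t with
  | leaf m => rfl
  | ask j Q y no ih1 ih2 =>
    by_cases hj : j = i
    · subst hj
      by_cases hQ : Q (P j) <;> simp [Out, eval, hQ, ih1, ih2]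
    · by_cases hQ : Q (P j) <;> simp [Out, eval, hQ, hj, ih1, ih2]

/-- The subtree at the node with address `h`, where action `0` stands for yes and `1` for no. -/
def sub : QTree n → List ℕ → Option (QTree n)
  | t, [] => some t
  | leaf _, _ :: _ => none
  | ask _ _ y no, a :: h => if a = 0 then sub y h else if a = 1 then sub no h else none

/-- The addresses of all nodes. -/
def hists : QTree n → Finset (List ℕ)
  | leaf _ => {[]}
  | ask _ _ y no =>
    insert [] ((hists y).image (fun h => 0 :: h) ∪ (hists no).image (fun h => 1 :: h))

lemma mem_hists (t : QTree n) (h : List ℕ) : h ∈ hists t ↔ ∃ t', sub t h = some t' := by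
  induction t generalizing h with
  | leaf m => cases h <;> simp [hists, sub]
  | ask j Q y no ih1 ih2 =>
    cases h with
    | nil => simp [hists, sub]
    | cons a h =>
      by_cases h0 : a = 0
      · subst h0; simp [hists, sub, ih1]
      · by_cases h1 : a = 1
        · subst h1; simp [hists, sub, ih2]
        · simp [hists, sub, h0, h1, Ne.symm h0, Ne.symm h1]

lemma sub_append (t : QTree n) (h g : List ℕ) :
    sub t (h ++ g) = (sub t h).bind (fun t' => sub t' g) := by
  induction h generalizing t with
  | nil => cases t <;> simp [sub]
  | cons a h ih =>
    cases t with
    | leaf m => simp [sub]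
    | ask j Q y no =>
      simp only [List.cons_append, sub]
      split_ifs <;> simp [ih]

variable [NeZero n]

/-- The extensive game form of a question tree. -/
def game (t : QTree n) : GameForm n where
  hist := hists t
  root_mem := by rw [mem_hists]; exact ⟨t, by cases t <;> rfl⟩
  prefix_closed := by
    intro h a hh
    rw [mem_hists] at hh ⊢
    obtain ⟨t', ht'⟩ := hh
    rw [sub_append, Option.bind_eq_some_iff] at ht'
    obtain ⟨t'', h1, -⟩ := ht'
    exact ⟨t'', h1⟩
  player := fun h => match sub t h with
    | some (ask i _ _ _) => i
    | _ => 0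
  outcome := fun h => match sub t h with
    | some (leaf m) => m
    | _ => id

open Classical in
/-- The truthful strategy of type `p`. -/
noncomputable def truth (t : QTree n) (p : Pref n) : Strategy := fun h => match sub t h with
  | some (ask _ Q _ _) => if Q p then 0 else 1
  | _ => 0

lemma terminal_iff (t : QTree n) (h : List ℕ) :
    (game t).Terminal h ↔ ∃ m, sub t h = some (leaf m) := by
  unfold GameForm.Terminal
  simp only [game, mem_hists, sub_append]
  constructor
  · rintro ⟨⟨t', ht'⟩, h2⟩
    cases t' with
    | leaf m => exact ⟨m, ht'⟩
    | ask j Q y no =>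
      have := h2 0
      simp [ht', sub] at this
  · rintro ⟨m, hm⟩
    exact ⟨⟨_, hm⟩, fun a => by simp [hm, sub]⟩

lemma valid_truth (t : QTree n) (i : Fin n) (p : Pref n) :
    (game t).ValidStrat i (truth t p) := by
  intro h hh hT _
  rw [terminal_iff] at hT
  simp only [game, mem_hists, sub_append] at hh ⊢
  obtain ⟨t', ht'⟩ := hh
  cases t' with
  | leaf m => exact absurd ⟨m, ht'⟩ hT
  | ask j Q y no =>
    by_cases hQ : Q p <;> simp [truth, ht', hQ, sub]

/-- Analysis of one step of play under valid strategies. -/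
lemma step_cases {t : QTree n} {s : Fin n → Strategy} (hs : ∀ j, (game t).ValidStrat j (s j))
    {h : List ℕ} (hh : h ∈ (game t).hist) (hT : ¬ (game t).Terminal h) :
    ∃ j Q y no, sub t h = some (ask j Q y no) ∧ (game t).player h = j ∧
      ((s j h = 0 ∧ sub t (h ++ [s j h]) = some y) ∨
        (s j h = 1 ∧ sub t (h ++ [s j h]) = some no)) := by
  have hv := hs _ h hh hT rfl
  rw [terminal_iff] at hT
  simp only [game, mem_hists] at hh
  obtain ⟨t', ht'⟩ := hh
  cases t' with
  | leaf m => exact absurd ⟨m, ht'⟩ hT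
  | ask j Q y no =>
    have hp : (game t).player h = j := by simp [game, ht']
    refine ⟨j, Q, y, no, ht', hp, ?_⟩
    rw [hp] at hv
    simp only [game, mem_hists, sub_append, ht', Option.bind_some, sub] at hv ⊢
    split_ifs at hv ⊢ with h0 h1
    · left; exact ⟨h0, by cases y <;> rfl⟩
    · right; exact ⟨h1, by cases no <;> rfl⟩
    · simp at hv

lemma good_of_reaches {t : QTree n} {i : Fin n} {p : Pref n} {s : Fin n → Strategy}
    (hs : ∀ j, (game t).ValidStrat j (s j)) (hsi : s i = truth t p) (hg : Good i p t)
    {h : List ℕ} (hr : (game t).Reaches s [] h) :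
    ∀ t', sub t h = some t' → Good i p t' := by
  induction hr with
  | refl => intro t' ht'; cases t <;> (simp only [sub, Option.some.injEq] at ht'; rwa [← ht'])
  | @step h hr h1 h2 ih =>
    intro t' ht'
    obtain ⟨j, Q, y, no, e1, e2, e3⟩ := step_cases hs h1 h2
    have hg' := ih _ e1
    rw [e2] at ht'
    simp only [Good] at hg'
    by_cases hji : j = i
    · subst hji
      rw [if_pos rfl] at hg'
      rw [hsi] at e3 ht'
      by_cases hQ : Q p
      · rcases e3 with ⟨a, b⟩ | ⟨a, b⟩
        · rw [b] at ht'; cases ht'; exact (hg'.1 hQ).1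
        · simp [truth, e1, hQ] at a
      · rcases e3 with ⟨a, b⟩ | ⟨a, b⟩
        · simp [truth, e1, hQ] at a
        · rw [b] at ht'; cases ht'; exact (hg'.2 hQ).1
    · rw [if_neg hji] at hg'
      rcases e3 with ⟨a, b⟩ | ⟨a, b⟩
      · rw [b] at ht'; cases ht'; exact hg'.1
      · rw [b] at ht'; cases ht'; exact hg'.2

lemma all_of_reaches {t : QTree n} {i : Fin n} {s : Fin n → Strategy}
    (hs : ∀ j, (game t).ValidStrat j (s j)) {h h' : List ℕ} (hr : (game t).Reaches s h h')
    {u : QTree n} (hu : sub t h = some u) {o : Fin n} :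
    ∀ u', sub t h' = some u' → All i o u' → All i o u := by
  induction hr with
  | refl => intro u' hu'; rw [hu] at hu'; cases hu'; exact id
  | @step h' hr h1 h2 ih =>
    intro u' hu' ha
    obtain ⟨j, Q, y, no, e1, e2, e3⟩ := step_cases hs h1 h2
    refine ih _ e1 ?_
    rw [e2] at hu'
    rcases e3 with ⟨a, b⟩ | ⟨a, b⟩
    · rw [b] at hu'; cases hu'; exact Or.inl ha
    · rw [b] at hu'; cases hu'; exact Or.inr ha

lemma out_of_reaches {t : QTree n} {i : Fin n} {p : Pref n} {s : Fin n → Strategy}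
    (hs : ∀ j, (game t).ValidStrat j (s j)) (hsi : s i = truth t p) {h h' : List ℕ}
    (hr : (game t).Reaches s h h') {u : QTree n} (hu : sub t h = some u) {o : Fin n} :
    ∀ u', sub t h' = some u' → Out i p o u' → Out i p o u := by
  induction hr with
  | refl => intro u' hu'; rw [hu] at hu'; cases hu'; exact id
  | @step h' hr h1 h2 ih =>
    intro u' hu' ha
    obtain ⟨j, Q, y, no, e1, e2, e3⟩ := step_cases hs h1 h2
    refine ih _ e1 ?_
    rw [e2] at hu'
    simp only [Out]
    by_cases hji : j = i
    · subst hji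
      rw [if_pos rfl]
      rw [hsi] at e3 hu'
      by_cases hQ : Q p
      · rcases e3 with ⟨a, b⟩ | ⟨a, b⟩
        · rw [b] at hu'; cases hu'; rwa [if_pos hQ]
        · simp [truth, e1, hQ] at a
      · rcases e3 with ⟨a, b⟩ | ⟨a, b⟩
        · simp [truth, e1, hQ] at a
        · rw [b] at hu'; cases hu'; rwa [if_neg hQ]
    · rw [if_neg hji]
      rcases e3 with ⟨a, b⟩ | ⟨a, b⟩
      · rw [b] at hu'; cases hu'; exact Or.inl ha
      · rw [b] at hu'; cases hu'; exact Or.inr ha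

lemma reaches_eval (t : QTree n) (P : Fin n → Pref n) (u : QTree n) :
    ∀ h, sub t h = some u → ∃ h', (game t).Reaches (fun j => truth t (P j)) h h' ∧
      (game t).Terminal h' ∧ (game t).outcome h' = eval P u := by
  induction u with
  | leaf m =>
    intro h hh
    exact ⟨h, .refl _, (terminal_iff _ _).mpr ⟨m, hh⟩, by simp [game, hh, eval]⟩
  | ask j Q y no ih1 ih2 =>
    intro h hh
    have hmem : h ∈ (game t).hist := (mem_hists _ _).mpr ⟨_, hh⟩
    have hT : ¬ (game t).Terminal h := by rw [terminal_iff, hh]; simp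
    obtain ⟨j', Q', y', no', e1, e2, e3⟩ :=
      step_cases (s := fun j => truth t (P j)) (fun j => valid_truth t j (P j)) hmem hT
    rw [hh] at e1
    cases e1
    have hstep := GameForm.Reaches.step (s := fun j => truth t (P j)) (.refl h) hmem hT
    rw [e2] at hstep
    by_cases hQ : Q (P j)
    · rcases e3 with ⟨a, b⟩ | ⟨a, b⟩
      · obtain ⟨h', g1, g2, g3⟩ := ih1 _ b
        exact ⟨h', reaches_trans hstep g1, g2, by rw [g3]; simp [eval, hQ]⟩
      · simp [truth, hh, hQ] at a
    · rcases e3 with ⟨a, b⟩ | ⟨a, b⟩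
      · simp [truth, hh, hQ] at a
      · obtain ⟨h', g1, g2, g3⟩ := ih2 _ b
        exact ⟨h', reaches_trans hstep g1, g2, by rw [g3]; simp [eval, hQ]⟩

/-- A tree in which truthful answers are obviously dominant implements its truthful outcome. -/
theorem osp_eval {D : Set (Pref n)} (t : QTree n) (hg : ∀ i, ∀ p ∈ D, Good i p t) :
    OSP D (fun P => eval P t) := by
  refine ⟨game t, fun _ p => truth t p, fun i p _ => valid_truth t i p, ?_, ?_⟩
  · rintro i p hp s' hs' h ⟨hh, hT, hpl, s, hs, hsi, hr⟩ - hne o o' ⟨s₁, v₁, e₁, t₁, r₁, T₁, rfl⟩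
      ⟨s₂, v₂, e₂, t₂, r₂, T₂, rfl⟩
    obtain ⟨j, Q, y, no, a1, a2, a3⟩ := step_cases v₁ hh hT
    obtain ⟨j', Q', y', no', b1, b2, b3⟩ := step_cases v₂ hh hT
    rw [a1] at b1
    cases b1
    have hji : j = i := a2.symm.trans hpl
    subst hji
    have hgood := good_of_reaches hs hsi (hg j p hp) hr _ a1
    simp only [Good, if_true] at hgood
    have hl : ∀ h, (game t).Terminal h → ∃ m, sub t h = some (leaf m) ∧
        (game t).outcome h = m := by
      intro h hT
      obtain ⟨m, hm⟩ := (terminal_iff _ _).mp hT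
      exact ⟨m, hm, by simp [game, hm]⟩
    obtain ⟨m₁, hm₁, ho₁⟩ := hl _ T₁
    obtain ⟨m₂, hm₂, ho₂⟩ := hl _ T₂
    have R₁ : (game t).Reaches s₁ (h ++ [s₁ j h]) t₁ := by
      rcases reaches_head r₁ with rfl | ⟨-, -, g⟩
      · exact absurd T₁ hT
      · rwa [a2] at g
    have R₂ : (game t).Reaches s₂ (h ++ [s₂ j h]) t₂ := by
      rcases reaches_head r₂ with rfl | ⟨-, -, g⟩
      · exact absurd T₂ hT
      · rwa [a2] at g
    have K₁ : ∀ u, sub t (h ++ [s₁ j h]) = some u → Out j p ((game t).outcome t₁ j) u :=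
      fun u hu => out_of_reaches v₁ e₁ R₁ hu _ hm₁ (by simp [Out, ho₁])
    have K₂ : ∀ u, sub t (h ++ [s₂ j h]) = some u → All j ((game t).outcome t₂ j) u :=
      fun u hu => all_of_reaches v₂ R₂ hu _ hm₂ (by simp [All, ho₂])
    rw [← e₂, ← e₁] at hne
    by_cases hQ : Q p
    · have h0 : s₁ j h = 0 := by simp [e₁, truth, a1, hQ]
      rcases a3 with ⟨-, a3⟩ | ⟨a3, -⟩
      · rcases b3 with ⟨b3, -⟩ | ⟨-, b3⟩
        · exact absurd (h0.trans b3.symm) hne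
        · exact (hgood.1 hQ).2 _ _ (K₁ _ a3) (K₂ _ b3)
      · omega
    · have h0 : s₁ j h = 1 := by simp [e₁, truth, a1, hQ]
      rcases a3 with ⟨a3, -⟩ | ⟨-, a3⟩
      · omega
      · rcases b3 with ⟨-, b3⟩ | ⟨b3, -⟩
        · exact (hgood.2 hQ).2 _ _ (K₁ _ a3) (K₂ _ b3)
        · exact absurd (h0.trans b3.symm) hne
  · intro P _
    exact reaches_eval t P t [] (by cases t <;> rfl)

end QTree

/-! ### The crawler as a question tree -/

section Crawler

variable {n : ℕ}

/-- `os c` is the `p`-best among the objects `os`. -/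
def IsBest {k : ℕ} (os : Fin k → Fin n) (c : Fin k) (p : Pref n) : Prop :=
  ∀ c', p (os c) ≤ p (os c')

/-- The pairs `(r, c)` with `c ≤ r`, sorted by the first coordinate. -/
def queries (k : ℕ) : List (Fin k × Fin k) :=
  (List.finRange k).flatMap fun r => ((List.finRange k).filter (· ≤ r)).map fun c => (r, c)

lemma mem_queries {k : ℕ} (rc : Fin k × Fin k) : rc ∈ queries k ↔ rc.2 ≤ rc.1 := by
  obtain ⟨r, c⟩ := rc
  simp [queries]

lemma queries_sorted (k : ℕ) : (queries k).Pairwise (fun x y => x.1 ≤ y.1) := by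
  unfold queries
  rw [List.pairwise_flatMap]
  constructor
  · intro r _
    rw [List.pairwise_map]
    exact List.pairwise_of_forall (fun _ _ => le_rfl)
  · refine (List.pairwise_lt_finRange k).imp ?_
    intro r r' h x hx y hy
    simp only [List.mem_map] at hx hy
    obtain ⟨_, -, rfl⟩ := hx
    obtain ⟨_, -, rfl⟩ := hy
    exact h.le

/-- Ask the questions in `L` in order: for `(r, c)`, agent `as r` is asked whether `os c` is her
best object. Play continues in `ch (r, c)` at the first yes, and in `d` if there is none. -/
def askAll {k : ℕ} (as os : Fin k → Fin n) (ch : Fin k × Fin k → QTree n) (d : QTree n)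
    (L : List (Fin k × Fin k)) : QTree n :=
  L.foldr (fun rc t => .ask (as rc.1) (IsBest os rc.2) (ch rc) t) d

/-- The crawler on remaining agents `as` and remaining objects `os`, agent `as r` currently
holding `os r`; agents that have left have their objects recorded in `acc`. In increasing
order of the held objects, the agents are asked whether their best remaining object is
`os c`, for each `os c` weakly below the held one. When `as r` takes `os c`, deleting the
entry `r` from `as` and the entry `c` from `os` makes precisely the agents between `c` and
`r` move up by one object. The last agent holds the largest object, so a truthful answer of
hers is never a no to all questions; after such answers she is given the held object. -/
def crawl : (k : ℕ) → (as os : Fin k → Fin n) → (acc : Fin n → Fin n) → QTree n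
  | 0, _, _, acc => .leaf acc
  | k + 1, as, os, acc =>
    askAll as os
      (fun rc => crawl k (as ∘ rc.1.succAbove) (os ∘ rc.2.succAbove)
        (Function.update acc (as rc.1) (os rc.2)))
      (crawl k (as ∘ (Fin.last k).succAbove) (os ∘ (Fin.last k).succAbove)
        (Function.update acc (as (Fin.last k)) (os (Fin.last k))))
      (queries (k + 1))

/-- The state after agent `as rc.1` has left with object `os rc.2`. -/
def child {k : ℕ} (as os : Fin (k + 1) → Fin n) (acc : Fin n → Fin n)
    (rc : Fin (k + 1) × Fin (k + 1)) : QTree n :=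
  crawl k (as ∘ rc.1.succAbove) (os ∘ rc.2.succAbove)
    (Function.update acc (as rc.1) (os rc.2))

lemma crawl_succ {k : ℕ} (as os : Fin (k + 1) → Fin n) (acc : Fin n → Fin n) :
    crawl (k + 1) as os acc =
      askAll as os (child as os acc) (child as os acc (Fin.last k, Fin.last k))
        (queries (k + 1)) := rfl

lemma all_askAll {k : ℕ} {as os : Fin k → Fin n} {ch : Fin k × Fin k → QTree n} {d : QTree n}
    {L : List (Fin k × Fin k)} {i o : Fin n} (h : QTree.All i o (askAll as os ch d L)) :
    (∃ rc ∈ L, QTree.All i o (ch rc)) ∨ QTree.All i o d := by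
  induction L with
  | nil => exact Or.inr h
  | cons x L ih =>
    rcases h with h | h
    · exact Or.inl ⟨x, by simp, h⟩
    · rcases ih h with ⟨rc, h1, h2⟩ | h
      · exact Or.inl ⟨rc, List.mem_cons_of_mem _ h1, h2⟩
      · exact Or.inr h

lemma all_crawl_succ {k : ℕ} {as os : Fin (k + 1) → Fin n} {acc : Fin n → Fin n} {i o : Fin n}
    (h : QTree.All i o (crawl (k + 1) as os acc)) :
    ∃ rc, QTree.All i o (child as os acc rc) := by
  rw [crawl_succ] at h
  rcases all_askAll h with ⟨rc, -, h⟩ | h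
  · exact ⟨rc, h⟩
  · exact ⟨_, h⟩

lemma all_crawl_of_left {k : ℕ} {as os : Fin k → Fin n} {acc : Fin n → Fin n} {i o : Fin n}
    (hi : ∀ r, as r ≠ i) (h : QTree.All i o (crawl k as os acc)) : o = acc i := by
  induction k generalizing acc with
  | zero => exact Eq.symm h
  | succ k ih =>
    obtain ⟨rc, h⟩ := all_crawl_succ h
    rw [ih (fun r => hi _) h, Function.update_of_ne (hi _).symm]

lemma all_child_self {k : ℕ} {as os : Fin (k + 1) → Fin n} {acc : Fin n → Fin n}
    (ha : Function.Injective as) {rc : Fin (k + 1) × Fin (k + 1)} {o : Fin n}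
    (h : QTree.All (as rc.1) o (child as os acc rc)) : o = os rc.2 := by
  have := all_crawl_of_left (fun r hr => Fin.succAbove_ne _ _ (ha hr)) h
  simpa using this

lemma all_crawl_mem {k : ℕ} {as os : Fin k → Fin n} {acc : Fin n → Fin n}
    (ha : Function.Injective as) (r : Fin k) {o : Fin n}
    (h : QTree.All (as r) o (crawl k as os acc)) : ∃ c, o = os c := by
  induction k generalizing acc with
  | zero => exact r.elim0
  | succ k ih =>
    obtain ⟨rc, h⟩ := all_crawl_succ h
    by_cases hr : r = rc.1
    · subst hr; exact ⟨_, all_child_self ha h⟩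
    · obtain ⟨s, rfl⟩ := Fin.exists_succAbove_eq hr
      obtain ⟨c, hc⟩ := ih (ha.comp Fin.succAbove_right_injective) s h
      exact ⟨_, hc⟩

lemma good_askAll_of_left {k : ℕ} {as os : Fin k → Fin n} {ch : Fin k × Fin k → QTree n}
    {d : QTree n} {L : List (Fin k × Fin k)} {i : Fin n} {p : Pref n} (hi : ∀ r, as r ≠ i)
    (hch : ∀ rc, QTree.Good i p (ch rc)) (hd : QTree.Good i p d) :
    QTree.Good i p (askAll as os ch d L) := by
  induction L with
  | nil => exact hd
  | cons x L ih =>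
    change QTree.Good i p (.ask _ _ _ _)
    simp only [QTree.Good, hi, if_false]
    exact ⟨hch x, ih⟩

lemma good_crawl_of_left {k : ℕ} {as os : Fin k → Fin n} {acc : Fin n → Fin n} {i : Fin n}
    {p : Pref n} (hi : ∀ r, as r ≠ i) : QTree.Good i p (crawl k as os acc) := by
  induction k generalizing acc with
  | zero => trivial
  | succ k ih =>
    exact good_askAll_of_left hi (fun rc => ih (fun r => hi _)) (ih (fun r => hi _))

/-- When `as r'` leaves with `os c'`, an agent at a higher position keeps her object. -/
lemma succAbove_of_lt {k : ℕ} {r r' c' : Fin (k + 1)} {s : Fin k} (h : r' < r) (hc : c' ≤ r')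
    (hs : r'.succAbove s = r) : c'.succAbove s = r := by
  subst hs
  simp only [Fin.succAbove, Fin.lt_def, Fin.le_def, Fin.ext_iff] at *
  split_ifs at * <;> simp at * <;> omega

/-- When `as r'` leaves with `os c'`, an agent at a lower position moves up by at most one. -/
lemma succAbove_of_gt {k : ℕ} {r r' c' : Fin (k + 1)} {s : Fin k} (h : r < r')
    (hs : r'.succAbove s = r) :
    (s : ℕ) = r ∧ ((r < c' ∧ c'.succAbove s = r) ∨
      (c' ≤ r ∧ (c'.succAbove s : ℕ) = r + 1)) := by
  subst hs
  simp only [Fin.succAbove, Fin.lt_def, Fin.le_def, Fin.ext_iff] at *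
  split_ifs at * <;> simp at * <;> omega

lemma exists_isBest {k : ℕ} (os : Fin (k + 1) → Fin n) (p : Pref n) : ∃ b, IsBest os b p := by
  obtain ⟨b, hb⟩ := Finite.exists_min (fun c => p (os c))
  exact ⟨b, hb⟩

lemma IsBest.eq {k : ℕ} {os : Fin k → Fin n} (ho : Function.Injective os) {p : Pref n}
    {b c : Fin k} (hb : IsBest os b p) (hc : IsBest os c p) : b = c :=
  ho (p.injective (le_antisymm (hb c) (hc b)))

/-- By single-peakedness, moving up towards the best object is an improvement. -/
lemma MidNotWorst.le_of_isBest {σ : Fin n ≃ Fin n} {p : Pref n} (hp : MidNotWorst σ p) {k : ℕ}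
    {os : Fin k → Fin n} (ho : StrictMono (σ ∘ os)) {b x y : Fin k} (hb : IsBest os b p)
    (hxy : x ≤ y) (hyb : y ≤ b) : p (os y) ≤ p (os x) := by
  rcases hyb.eq_or_lt with rfl | hyb
  · exact hb x
  rcases hxy.eq_or_lt with rfl | hxy
  · exact le_rfl
  exact ((hp _ _ _ (ho hxy) (ho hyb)).resolve_right (not_lt.mpr (hb y))).le

/-- Answering truthfully is obviously dominant, and secures an object at least as good as the
one currently held. -/
lemma crawl_good {σ : Fin n ≃ Fin n} {p : Pref n} (hp : MidNotWorst σ p) {k : ℕ}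
    (as os : Fin k → Fin n) (acc : Fin n → Fin n) (ha : Function.Injective as)
    (ho : StrictMono (σ ∘ os)) (r : Fin k) :
    QTree.Good (as r) p (crawl k as os acc) ∧
      ∀ o, QTree.Out (as r) p o (crawl k as os acc) → p o ≤ p (os r) := by
  induction k generalizing acc with
  | zero => exact r.elim0
  | succ k ih =>
    obtain ⟨b, hb⟩ := exists_isBest os p
    have hoi : Function.Injective os := fun x y h => ho.injective (by simp [h])
    have hchild : ∀ rc : Fin (k + 1) × Fin (k + 1), rc.2 ≤ rc.1 → rc.1 ≠ r →
        (r < rc.1 → r < b) → QTree.Good (as r) p (child as os acc rc) ∧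
          ∀ o, QTree.Out (as r) p o (child as os acc rc) → p o ≤ p (os r) := by
      rintro ⟨r', c'⟩ hc hr hrb
      simp only at hc hr hrb
      obtain ⟨s, hs⟩ := Fin.exists_succAbove_eq hr.symm
      have := ih (as ∘ r'.succAbove) (os ∘ c'.succAbove)
        (Function.update acc (as r') (os c')) (ha.comp Fin.succAbove_right_injective)
        (ho.comp (Fin.strictMono_succAbove _)) s
      simp only [Function.comp, hs] at this
      refine ⟨this.1, fun o h => (this.2 o h).trans ?_⟩
      rcases lt_or_gt_of_ne hr with h | h
      · rw [succAbove_of_lt h hc hs]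
      · rcases (succAbove_of_gt (c' := c') h hs).2 with ⟨-, e⟩ | ⟨-, e⟩
        · rw [e]
        · have := hrb h
          refine hp.le_of_isBest ho hb ?_ ?_ <;> rw [Fin.le_def, e]
          · omega
          · exact this
    -- `L` stands for the questions still to be asked in the current round; as long as `as r`
    -- can find her best object below, the question about it is among them.
    have key : ∀ L : List (Fin (k + 1) × Fin (k + 1)), L.Pairwise (fun x y => x.1 ≤ y.1) →
        (∀ rc ∈ L, rc.2 ≤ rc.1) → (b ≤ r → (r, b) ∈ L) →
        let t := askAll as os (child as os acc) (child as os acc (Fin.last k, Fin.last k)) L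
        QTree.Good (as r) p t ∧ (∀ o, QTree.Out (as r) p o t → p o ≤ p (os r)) ∧
          (b ≤ r → (∀ rc ∈ L, r ≤ rc.1) → ∀ o, QTree.Out (as r) p o t → o = os b) := by
      intro L
      induction L with
      | nil =>
        intro _ _ h
        have hrb : r < b := not_le.mp (fun h' => by simpa using h h')
        have := hchild (Fin.last k, Fin.last k) le_rfl
          (fun h => absurd hrb (not_lt.mpr (h ▸ Fin.le_last b))) (fun _ => hrb)
        exact ⟨this.1, this.2, fun h => absurd hrb (not_lt.mpr h)⟩
      | cons x L ihL =>
        obtain ⟨r', c'⟩ := x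
        intro hL hle hmem
        rw [List.pairwise_cons] at hL
        obtain ⟨hx, hL⟩ := hL
        have hle' : c' ≤ r' := hle _ List.mem_cons_self
        have ihL := ihL hL (fun rc h => hle rc (List.mem_cons_of_mem _ h))
        intro t
        have ht : t = .ask (as r') (IsBest os c') (child as os acc (r', c'))
          (askAll as os (child as os acc) (child as os acc (Fin.last k, Fin.last k)) L) := rfl
        rw [ht]
        by_cases hr : r' = r
        · subst hr
          simp only [QTree.Good, QTree.Out, if_true]
          by_cases hc : IsBest os c' p
          · obtain rfl := hb.eq hoi hc
            simp only [hc, if_true, not_true, IsEmpty.forall_iff, and_true, forall_true_left]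
            have hall : ∀ o, QTree.Out (as r') p o (child as os acc (r', b)) → o = os b :=
              fun o h => all_child_self (rc := (r', b)) ha h.all
            refine ⟨⟨?_, ?_⟩, fun o h => ?_, fun _ _ => hall⟩
            · exact good_crawl_of_left (fun s hs => Fin.succAbove_ne _ _ (ha hs))
            · intro o o' h h'
              rw [hall o h]
              obtain ⟨c, rfl⟩ : ∃ c, o' = os c := by
                rcases all_askAll h' with ⟨rc, -, h⟩ | h
                · by_cases hrc : r' = rc.1
                  · subst hrc; exact ⟨_, all_child_self ha h⟩
                  · obtain ⟨s, hs⟩ := Fin.exists_succAbove_eq hrc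
                    rw [← hs] at h
                    obtain ⟨c, hc⟩ :=
                      all_crawl_mem (ha.comp Fin.succAbove_right_injective) s h
                    exact ⟨_, hc⟩
                · by_cases hrc : r' = Fin.last k
                  · subst hrc; exact ⟨_, all_child_self (rc := (_, _)) ha h⟩
                  · obtain ⟨s, hs⟩ := Fin.exists_succAbove_eq hrc
                    rw [← hs] at h
                    obtain ⟨c, hc⟩ :=
                      all_crawl_mem (ha.comp Fin.succAbove_right_injective) s h
                    exact ⟨_, hc⟩
              exact hb c
            · rw [hall o h]; exact hb r'
          · have hcb : c' ≠ b := by rintro rfl; exact hc hb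
            have ihL := ihL (fun h => by
              rcases List.mem_cons.mp (hmem h) with e | e
              · exact absurd (congrArg Prod.snd e).symm hcb
              · exact e)
            simp only [hc, if_false, not_false_eq_true, IsEmpty.forall_iff, true_and,
              forall_true_left]
            refine ⟨⟨ihL.1, ?_⟩, ihL.2.1, fun h _ => ihL.2.2 h (fun rc h => hx rc h)⟩
            intro o o' h h'
            rw [all_child_self (rc := (r', c')) ha h']
            by_cases hbr : b ≤ r'
            · rw [ihL.2.2 hbr (fun rc h => hx rc h) o h]
              exact hb c'
            · exact (ihL.2.1 o h).trans (hp.le_of_isBest ho hb hle' (not_le.mp hbr).le)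
        · have hr' : ¬ as r' = as r := fun h => hr (ha h)
          simp only [QTree.Good, QTree.Out, hr', if_false]
          have ihL := ihL (fun h => by
            rcases List.mem_cons.mp (hmem h) with e | e
            · exact absurd (congrArg Prod.fst e).symm hr
            · exact e)
          have hch := hchild (r', c') hle' hr (fun h => by
            by_contra hcon
            rcases List.mem_cons.mp (hmem (not_lt.mp hcon)) with e | e
            · exact hr (congrArg Prod.fst e).symm
            · exact absurd h (not_lt.mpr (hx _ e)))
          refine ⟨⟨hch.1, ihL.1⟩, ?_, ?_⟩
          · rintro o (h | h)
            · exact hch.2 o h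
            · exact ihL.2.1 o h
          · intro hbr hall
            exfalso
            have h1 : r < r' := lt_of_le_of_ne (hall _ List.mem_cons_self) (Ne.symm hr)
            rcases List.mem_cons.mp (hmem hbr) with e | e
            · exact hr (congrArg Prod.fst e).symm
            · exact absurd h1 (not_lt.mpr (hx _ e))
    have := key (queries (k + 1)) (queries_sorted _) (fun rc h => (mem_queries rc).mp h)
      (fun h => (mem_queries _).mpr h)
    exact ⟨this.1, this.2.1⟩

/-- Under truthful play, the agent who leaves is the first whose best remaining object lies
weakly below the object she holds, and she takes that best object. -/
lemma eval_crawl_succ (P : Fin n → Pref n) {k : ℕ} (as os : Fin (k + 1) → Fin n)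
    (acc : Fin n → Fin n) :
    ∃ r c, c ≤ r ∧ IsBest os c (P (as r)) ∧
      (∀ r' c', r' < r → c' ≤ r' → ¬ IsBest os c' (P (as r'))) ∧
      (crawl (k + 1) as os acc).eval P = (child as os acc (r, c)).eval P := by
  have key : ∀ L : List (Fin (k + 1) × Fin (k + 1)), L.Pairwise (fun x y => x.1 ≤ y.1) →
      (∃ rc ∈ L, IsBest os rc.2 (P (as rc.1))) →
      ∃ rc ∈ L, IsBest os rc.2 (P (as rc.1)) ∧
        (∀ x ∈ L, x.1 < rc.1 → ¬ IsBest os x.2 (P (as x.1))) ∧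
        (askAll as os (child as os acc) (child as os acc (Fin.last k, Fin.last k)) L).eval P =
          (child as os acc rc).eval P := by
    intro L
    induction L with
    | nil => simp
    | cons x L ih =>
      intro hL hex
      rw [List.pairwise_cons] at hL
      have ht : (askAll as os (child as os acc) (child as os acc (Fin.last k, Fin.last k))
          (x :: L)) = .ask (as x.1) (IsBest os x.2) (child as os acc x)
        (askAll as os (child as os acc) (child as os acc (Fin.last k, Fin.last k)) L) := rfl
      rw [ht]
      by_cases hx : IsBest os x.2 (P (as x.1))
      · refine ⟨x, List.mem_cons_self, hx, ?_, by simp [QTree.eval, hx]⟩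
        intro y hy hyx
        rcases List.mem_cons.mp hy with rfl | hy
        · exact absurd hyx (lt_irrefl _)
        · exact absurd hyx (not_lt.mpr (hL.1 y hy))
      · obtain ⟨rc, h1, h2, h3, h4⟩ := ih hL.2 (by
          obtain ⟨y, hy, hyb⟩ := hex
          rcases List.mem_cons.mp hy with rfl | hy
          · exact absurd hyb hx
          · exact ⟨y, hy, hyb⟩)
        refine ⟨rc, List.mem_cons_of_mem _ h1, h2, ?_, by simp [QTree.eval, hx, h4]⟩
        intro y hy hyx
        rcases List.mem_cons.mp hy with rfl | hy
        · exact hx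
        · exact h3 y hy hyx
  obtain ⟨b, hb⟩ := exists_isBest os (P (as (Fin.last k)))
  obtain ⟨⟨r, c⟩, h1, h2, h3, h4⟩ := key (queries (k + 1)) (queries_sorted _)
    ⟨(Fin.last k, b), (mem_queries _).mpr (Fin.le_last b), hb⟩
  exact ⟨r, c, (mem_queries _).mp h1, h2,
    fun r' c' hr hc => h3 (r', c') ((mem_queries _).mpr hc) hr, h4⟩

lemma eval_child_self (P : Fin n → Pref n) {k : ℕ} {as os : Fin (k + 1) → Fin n}
    (acc : Fin n → Fin n) (ha : Function.Injective as) (r c : Fin (k + 1)) :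
    (child as os acc (r, c)).eval P (as r) = os c :=
  all_child_self (rc := (r, c)) ha (QTree.out_eval P _ _).all

lemma eval_crawl_inj (P : Fin n → Pref n) {k : ℕ} (as os : Fin k → Fin n)
    (acc : Fin n → Fin n) (ha : Function.Injective as) (ho : Function.Injective os) :
    Function.Injective (fun r => (crawl k as os acc).eval P (as r)) := by
  induction k generalizing acc with
  | zero => exact fun r => r.elim0
  | succ k ih =>
    obtain ⟨r, c, -, -, -, he⟩ := eval_crawl_succ P as os acc
    have hself := eval_child_self P (os := os) acc ha r c
    have ih := ih (as ∘ r.succAbove) (os ∘ c.succAbove) (Function.update acc (as r) (os c))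
      (ha.comp Fin.succAbove_right_injective) (ho.comp Fin.succAbove_right_injective)
    have hne : ∀ s, (child as os acc (r, c)).eval P (as (r.succAbove s)) ≠ os c := by
      intro s h
      obtain ⟨d, hd⟩ := all_crawl_mem (ha.comp Fin.succAbove_right_injective) s
        (QTree.out_eval P (as (r.succAbove s)) (child as os acc (r, c))).all
      rw [h] at hd
      exact Fin.succAbove_ne c d (ho hd.symm)
    intro x y hxy
    simp only [he] at hxy
    by_cases hx : x = r <;> by_cases hy : y = r
    · rw [hx, hy]
    · obtain ⟨s, rfl⟩ := Fin.exists_succAbove_eq hy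
      subst hx
      exact absurd (hxy.symm.trans hself) (hne s)
    · obtain ⟨s, rfl⟩ := Fin.exists_succAbove_eq hx
      subst hy
      exact absurd (hxy.trans hself) (hne s)
    · obtain ⟨s, rfl⟩ := Fin.exists_succAbove_eq hx
      obtain ⟨s', rfl⟩ := Fin.exists_succAbove_eq hy
      rw [ih hxy]

/-- The crawler outcome is a serial-dictatorship outcome for the order of departures, so no
other allocation of the remaining objects weakly improves on it for everyone. -/
lemma eval_crawl_eff (P : Fin n → Pref n) {k : ℕ} (as os : Fin k → Fin n)
    (acc m : Fin n → Fin n) (ha : Function.Injective as) (hm : ∀ r, ∃ c, m (as r) = os c)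
    (hmi : Function.Injective (fun r => m (as r)))
    (hw : ∀ r, P (as r) (m (as r)) ≤ P (as r) ((crawl k as os acc).eval P (as r))) :
    ∀ r, m (as r) = (crawl k as os acc).eval P (as r) := by
  induction k generalizing acc with
  | zero => exact fun r => r.elim0
  | succ k ih =>
    obtain ⟨r, c, -, hb, -, he⟩ := eval_crawl_succ P as os acc
    have hself := eval_child_self P (os := os) acc ha r c
    have hmr : m (as r) = os c := by
      have h1 := hw r
      rw [he, hself] at h1
      obtain ⟨d, hd⟩ := hm r
      exact (P (as r)).injective (le_antisymm h1 (hd ▸ hb d))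
    have ih := ih (as ∘ r.succAbove) (os ∘ c.succAbove) (Function.update acc (as r) (os c))
      (ha.comp Fin.succAbove_right_injective)
      (fun s => by
        obtain ⟨d, hd⟩ := hm (r.succAbove s)
        have hdc : d ≠ c := by
          rintro rfl
          exact Fin.succAbove_ne r s (hmi (hd.trans hmr.symm))
        obtain ⟨e, rfl⟩ := Fin.exists_succAbove_eq hdc
        exact ⟨e, hd⟩)
      (hmi.comp Fin.succAbove_right_injective)
      (fun s => by have := hw (r.succAbove s); rw [he] at this; exact this)
    intro x
    rw [he]
    by_cases hx : x = r
    · subst hx; rw [hmr, hself]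
    · obtain ⟨s, rfl⟩ := Fin.exists_succAbove_eq hx
      exact ih s

/-- Equity when the acclaimed agent `i` wants an object `t` below her own: only null agents,
keeping their endowments, leave before `i`. -/
lemma crawl_equity_left {σ : Fin n ≃ Fin n} {P : Fin n → Pref n}
    (hsp : ∀ j, MidNotWorst σ (P j)) {A : Finset (Fin n)}
    (hnull : ∀ j, j ∉ A → ∀ o, P j j ≤ P j o) {i t : Fin n} (hti : σ t < σ i)
    (htA : t ∈ A) (hiA : i ∈ A) (ht : ∀ o ∈ A, P i t ≤ P i o)
    (hacc : ∀ j ∈ A, j ≠ i → ∀ o ∈ A, P j i ≤ P j o)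
    {k : ℕ} (as : Fin k → Fin n) (acc : Fin n → Fin n) (ha : StrictMono (σ ∘ as))
    (hA : ∀ o ∈ A, ∃ r, as r = o) : (crawl k as as acc).eval P i = t := by
  induction k generalizing acc with
  | zero => exact (hA i hiA).choose.elim0
  | succ k ih =>
    have hai : Function.Injective as := fun x y h => ha.injective (by simp [h])
    obtain ⟨r, c, hcr, hb, hfirst, he⟩ := eval_crawl_succ P as as acc
    obtain ⟨s, rfl⟩ := hA i hiA
    obtain ⟨u, rfl⟩ := hA t htA
    have hus : u < s := ha.lt_iff_lt.mp hti
    have hts : P (as s) (as u) < P (as s) (as s) :=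
      lt_of_le_of_ne (ht _ hiA) (fun h => hus.ne (hai ((P _).injective h)))
    rw [he]
    rcases lt_trichotomy r s with hrs | rfl | hrs
    · have hcr' : c = r := by
        by_cases hj : as r ∈ A
        · exfalso
          have hlt : P (as r) (as s) < P (as r) (as r) :=
            lt_of_le_of_ne (hacc _ hj (fun h => hrs.ne (hai h)) _ hj)
              (fun h => hrs.ne' (hai ((P _).injective h)))
          rcases hcr.eq_or_lt with rfl | hcr
          · exact absurd hlt (not_lt.mpr (hb s))
          · rcases hsp (as r) _ _ _ (ha hcr) (ha hrs) with h | h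
            · exact absurd h (not_lt.mpr (hb r))
            · exact lt_asymm h hlt
        · exact IsBest.eq hai hb (fun c' => hnull _ hj _)
      subst hcr'
      refine ih (as ∘ c.succAbove) (Function.update acc (as c) (as c))
        (ha.comp (Fin.strictMono_succAbove _)) ?_
      intro o ho
      obtain ⟨x, rfl⟩ := hA o ho
      have hxc : x ≠ c := by
        rintro rfl
        have hne : as x ≠ as s := fun h => hrs.ne (hai h)
        have := hacc _ ho hne _ ho
        exact hne ((P (as x)).injective (le_antisymm (hb s) this))
      obtain ⟨y, rfl⟩ := Fin.exists_succAbove_eq hxc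
      exact ⟨y, rfl⟩
    · rw [eval_child_self P acc hai]
      by_cases hcA : as c ∈ A
      · exact (P (as r)).injective (le_antisymm (hb u) (ht _ hcA))
      · exfalso
        have hne : c ≠ r := by rintro rfl; exact hcA hiA
        exact hfirst c c (lt_of_le_of_ne hcr hne) le_rfl (fun c' => hnull _ hcA _)
    · exfalso
      obtain ⟨b, hbs⟩ := exists_isBest as (P (as s))
      have hsb : s < b := not_le.mp fun h => hfirst s b hrs h hbs
      rcases hsp (as s) _ _ _ (ha hus) (ha hsb) with h | h
      · exact lt_asymm h hts
      · exact absurd h (not_lt.mpr (hbs s))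

/-- Equity when the acclaimed agent `i` wants an object `t` above her own. Agents above `i`
keep holding their endowments. Each active one leaves as soon as `i` holds the object just
below hers, and then `i` moves up to that endowment, until `i` holds `t`. -/
lemma crawl_equity_right {σ : Fin n ≃ Fin n} {P : Fin n → Pref n}
    (hsp : ∀ j, MidNotWorst σ (P j)) {A : Finset (Fin n)}
    (hnull : ∀ j, j ∉ A → ∀ o, P j j ≤ P j o) {i t : Fin n} (hti : σ i < σ t)
    (htA : t ∈ A) (hiA : i ∈ A) (ht : ∀ o ∈ A, P i t ≤ P i o)
    (hacc : ∀ j ∈ A, j ≠ i → ∀ o ∈ A, P j i ≤ P j o)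
    {k : ℕ} (as os : Fin k → Fin n) (acc : Fin n → Fin n) (ha : Function.Injective as)
    (ho : StrictMono (σ ∘ os)) (r : Fin k) (hr : as r = i) (hsame : ∀ s, r < s → as s = os s)
    (hir : σ i ≤ σ (os r)) (hrt : σ (os r) ≤ σ t) (u : Fin k) (hu : os u = t)
    (hlow : ∀ c, c ≤ r → os c ∈ A ∨ σ (os c) < σ i) :
    (crawl k as os acc).eval P i = t := by
  induction k generalizing acc with
  | zero => exact r.elim0
  | succ k ih =>
    have hoi : Function.Injective os := fun x y h => ho.injective (by simp [h])
    obtain ⟨r', c', hcr, hb, hfirst, he⟩ := eval_crawl_succ P as os acc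
    have hru : r ≤ u := ho.le_iff_le.mp (by simpa [hu] using hrt)
    have hrA : os r ∈ A := (hlow r le_rfl).resolve_right (not_lt.mpr hir)
    have hti' : P i t < P i i :=
      lt_of_le_of_ne (ht _ hiA) (fun h => hti.ne' (congrArg σ ((P i).injective h)))
    rw [he]
    rcases lt_trichotomy r' r with hlt | rfl | hgt
    · obtain ⟨s, hs⟩ := Fin.exists_succAbove_eq hlt.ne'
      have hcs := succAbove_of_lt hlt hcr hs
      have huc : u ≠ c' := (lt_of_le_of_lt hcr (hlt.trans_le hru)).ne'
      obtain ⟨v, hv⟩ := Fin.exists_succAbove_eq huc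
      refine ih (as ∘ r'.succAbove) (os ∘ c'.succAbove) _
        (ha.comp Fin.succAbove_right_injective) (ho.comp (Fin.strictMono_succAbove _)) s
        (by simp [hs, hr]) ?_ (by simpa [hcs] using hir) (by simpa [hcs] using hrt) v
        (by simp [hv, hu]) ?_
      · intro x hx
        have h1 : r < r'.succAbove x := hs ▸ Fin.strictMono_succAbove r' hx
        have h2 := succAbove_of_lt (hlt.trans h1) hcr rfl
        simp only [Function.comp, h2]
        exact hsame _ h1
      · intro x hx
        exact hlow _ (hcs ▸ (Fin.strictMono_succAbove c').monotone hx)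
    · rw [← hr, eval_child_self P acc ha]
      rw [hr] at hb
      by_cases hcA : os c' ∈ A
      · refine (P i).injective (le_antisymm ?_ (ht _ hcA))
        rw [← hu]
        exact hb u
      · exfalso
        have hci : σ (os c') < σ i := (hlow c' hcr).resolve_left hcA
        have hct : P i (os c') ≤ P i t := hu ▸ hb u
        rcases hsp i _ _ _ hci hti with h | h
        · exact absurd (hct.trans_lt hti') (not_lt.mpr h.le)
        · exact lt_asymm h hti'
    · -- the agent `q` holding the next object is the one who leaves
      have hk : (r : ℕ) + 1 < k + 1 := lt_of_le_of_lt (Nat.succ_le_of_lt hgt) r'.isLt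
      let q : Fin (k + 1) := ⟨r + 1, hk⟩
      have hrq : r < q := Fin.lt_def.mpr (Nat.lt_succ_self _)
      have hqmin : ∀ x, r < x → q ≤ x := fun x hx => Fin.le_def.mpr hx
      have haq : as q = os q := hsame q hrq
      have hiq : σ i < σ (os q) := hir.trans_lt (ho hrq)
      have hqi : as q ≠ i := fun h => hrq.ne' (ha (h.trans hr.symm))
      have hqact : as q ∈ A → P (as q) (os r) < P (as q) (os q) := by
        intro hqA
        have h1 := hacc _ hqA hqi _ hqA
        rw [haq] at h1 ⊢
        have h2 : P (os q) i < P (os q) (os q) := lt_of_le_of_ne h1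
          (fun h => hiq.ne (congrArg σ ((P _).injective h)))
        rcases hir.eq_or_lt with e | e
        · rw [← σ.injective e]; exact h2
        · rcases hsp (os q) _ _ _ e (ho hrq) with h | h
          · exact h.trans h2
          · exact h
      obtain rfl : r' = q := by
        by_contra hne
        have hqr' : q < r' := lt_of_le_of_ne (hqmin _ hgt) (Ne.symm hne)
        obtain ⟨b, hbq⟩ := exists_isBest os (P (as q))
        have hqb : q < b := not_le.mp fun h => hfirst q b hqr' h hbq
        by_cases hqA : as q ∈ A
        · rcases hsp (as q) _ _ _ (ho hrq) (ho hqb) with h | h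
          · exact lt_asymm h (hqact hqA)
          · exact absurd h (not_lt.mpr (hbq q))
        · refine hfirst q q hqr' le_rfl (fun c => ?_)
          rw [← haq]
          exact hnull _ hqA _
      obtain ⟨s, hs⟩ := Fin.exists_succAbove_eq hrq.ne
      obtain ⟨hsr, hcs⟩ := succAbove_of_gt (c' := c') hrq hs
      -- whoever is above `q` keeps her position
      have hsame' : ∀ x, s < x → (as ∘ q.succAbove) x = (os ∘ c'.succAbove) x := by
        intro x hx
        have h1 : r < q.succAbove x := hs ▸ Fin.strictMono_succAbove q hx
        have h2 : q < q.succAbove x := lt_of_le_of_ne (hqmin _ h1) (Fin.succAbove_ne q x).symm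
        simp only [Function.comp, succAbove_of_lt h2 hcr rfl]
        exact hsame _ h1
      by_cases hqA : as q ∈ A
      · have hcq : c' ≠ q := by
          rintro rfl
          exact absurd (hqact hqA) (not_lt.mpr (hb r))
        have hcr' : c' ≤ r := not_lt.mp fun h => hcq (le_antisymm hcr (hqmin _ h))
        have hcs' : c'.succAbove s = q := by
          rcases hcs with ⟨h, -⟩ | ⟨-, h⟩
          · exact absurd hcr' (not_le.mpr h)
          · exact Fin.ext h
        have hur : u ≠ r := by
          -- otherwise `i` holds `t` and waits for a better null object above `os q`
          rintro rfl
          obtain ⟨b, hbi⟩ := exists_isBest os (P i)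
          have hub : u < b := not_le.mp fun h => hfirst u b hrq h (hr ▸ hbi)
          have hqb : q < b := by
            refine lt_of_le_of_ne (hqmin _ hub) ?_
            rintro rfl
            have h1 := ht _ (haq ▸ hqA)
            have h2 := hbi u
            rw [hu] at h2
            exact hub.ne (hoi (hu.trans ((P i).injective (le_antisymm h1 h2))))
          rcases hsp i _ _ _ (ho hrq) (ho hqb) with h | h
          · rw [hu] at h
            exact absurd (ht _ (haq ▸ hqA)) (not_le.mpr h)
          · exact absurd h (not_lt.mpr (hbi q))
        have hqu : q ≤ u := hqmin _ (lt_of_le_of_ne hru hur.symm)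
        obtain ⟨v, hv⟩ := Fin.exists_succAbove_eq (hcr'.trans_lt (hrq.trans_le hqu)).ne'
        refine ih (as ∘ q.succAbove) (os ∘ c'.succAbove) _
          (ha.comp Fin.succAbove_right_injective) (ho.comp (Fin.strictMono_succAbove _)) s
          (by simp [hs, hr]) hsame' (by simpa [hcs'] using hiq.le) ?_ v (by simp [hv, hu]) ?_
        · have := ho.monotone hqu
          simpa [hcs', hu] using this
        · intro x hx
          have h1 : c'.succAbove x ≤ q := hcs' ▸ (Fin.strictMono_succAbove c').monotone hx
          rcases h1.eq_or_lt with e | h1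
          · left; simp only [Function.comp, e]; exact haq ▸ hqA
          · exact hlow _ (not_lt.mp fun h => absurd (hqmin _ h) (not_le.mpr h1))
      · obtain rfl : c' = q := by
          refine IsBest.eq hoi hb (fun c => ?_)
          rw [← haq]
          exact hnull _ hqA _
        have huq : u ≠ q := by
          rintro rfl
          exact hqA (haq ▸ hu ▸ htA)
        obtain ⟨v, hv⟩ := Fin.exists_succAbove_eq huq
        refine ih (as ∘ q.succAbove) (os ∘ q.succAbove) _
          (ha.comp Fin.succAbove_right_injective) (ho.comp (Fin.strictMono_succAbove _)) s
          (by simp [hs, hr]) hsame' (by simpa [hs] using hir) (by simpa [hs] using hrt) v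
          (by simp [hv, hu]) ?_
        intro x hx
        exact hlow _ (hs ▸ (Fin.strictMono_succAbove q).monotone hx)

/-- The crawler started from the endowments has all required properties on single-peaked
domains. -/
lemma exists_rule_of_isSPDomain [NeZero n] {D : Set (Pref n)} (hD : IsSPDomain D) :
    ∃ f : (Fin n → Pref n) → (Fin n → Fin n),
      IsRule D f ∧ Efficient D f ∧ IndRational D f ∧ OSP D f ∧ EquityUA D f := by
  obtain ⟨σ, hσ⟩ := hD
  have hmid : ∀ p ∈ D, MidNotWorst σ p := fun p hp => singlePeaked.mid (hσ hp)
  have hmono : StrictMono (σ ∘ σ.symm) := by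
    rw [Equiv.self_comp_symm]; exact strictMono_id
  have hinj : Function.Injective σ.symm := σ.symm.injective
  have hgood : ∀ p ∈ D, ∀ i, QTree.Good i p (crawl n σ.symm σ.symm id) ∧
      ∀ o, QTree.Out i p o (crawl n σ.symm σ.symm id) → p o ≤ p i := by
    intro p hp i
    have := crawl_good (hmid p hp) σ.symm σ.symm id hinj hmono (σ i)
    simpa using this
  refine ⟨fun P => (crawl n σ.symm σ.symm id).eval P, ?_, ?_, ?_, ?_, ?_⟩
  · intro P hP
    have h := eval_crawl_inj P σ.symm σ.symm id hinj hinj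
    refine Finite.injective_iff_bijective.mp (fun x y hxy => ?_)
    have := @h (σ x) (σ y) (by simpa using hxy)
    exact σ.injective this
  · rintro P hP ⟨m, hm, hw, j, hj⟩
    have h := eval_crawl_eff P σ.symm σ.symm id m hinj (fun r => ⟨σ (m (σ.symm r)), by simp⟩)
      (hm.injective.comp hinj) (fun r => hw _) (σ j)
    simp only [Equiv.symm_apply_apply] at h
    unfold prefers at hj
    simp only [h] at hj
    exact lt_irrefl _ hj
  · intro P hP i
    exact (hgood _ (hP i) i).2 _ (QTree.out_eval P i _)
  · exact QTree.osp_eval _ (fun i p hp => (hgood p hp i).1)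
  · rintro P hP i ⟨-, hiA, hne, hacc⟩
    have hsp : ∀ j, MidNotWorst σ (P j) := fun j => hmid _ (hP j)
    have hnull : ∀ j, j ∉ activeAgents P → ∀ o, P j j ≤ P j o := by
      intro j hj o
      simp only [activeAgents, Finset.mem_filter, Finset.mem_univ, true_and, not_not] at hj
      have := top_le (P j) o
      rwa [hj] at this
    have hbest := fun j => best_spec (P j) ⟨i, hiA⟩
    have hacc' : ∀ j ∈ activeAgents P, j ≠ i → ∀ o ∈ activeAgents P, P j i ≤ P j o := by
      intro j hj hji o ho
      have := (hbest j).2 o ho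
      rwa [hacc j hj hji] at this
    rcases lt_or_gt_of_ne (fun h => hne (σ.injective h)) with h | h
    · exact crawl_equity_left hsp hnull h (hbest i).1 hiA (hbest i).2 hacc' _ _ hmono
        (fun o _ => ⟨σ o, by simp⟩)
    · refine crawl_equity_right hsp hnull h (hbest i).1 hiA (hbest i).2 hacc' _ _ _ hinj hmono
        (σ i) (by simp) (fun _ _ => rfl) (by simp) (by simpa using h.le)
        (σ (best (P i) (activeAgents P))) (by simp) ?_
      intro c hc
      rcases hc.eq_or_lt with rfl | hc
      · left; simpa using hiA
      · right; simpa using hc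

end Crawler

theorem equity_unanimous_iff_single_peaked (n : ℕ) [NeZero n] (hn : 3 ≤ n)
    (D : Set (Pref n)) (hrich : richDomain D) :
    (∃ f : (Fin n → Pref n) → (Fin n → Fin n),
        IsRule D f ∧ Efficient D f ∧ IndRational D f ∧ OSP D f ∧ EquityUA D f) ↔
      IsSPDomain D := by
  constructor
  · rintro ⟨f, hr, -, hir, hosp, heq⟩
    exact isSPDomain_of_rule hn hrich hr hir heq hosp
  · exact exists_rule_of_isSPDomain
end

section
/- Let n ≥ 3, let < be a linear order on the set of objects O, and let D be a domain with D ⊆ D_< (every preference in D is single-peaked w.r.t. <). Then the crawler rule C : D^n → M defined according to < satisfies equity under unanimous acclaim: at every profile P at which an acclaimed agent i exists, C_i(P) = max^{P_i} O^active(P). -/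
/-! ### Best and adjacent objects, single-peakedness -/

section Basics

variable {n : ℕ}

/-- An `argmin` over a nonempty finset (with any default value) lies in it and is minimal. -/
lemma argmin_getD_spec {α : Type*} (S : Finset α) (f : α → Fin n) (d : α) (hS : S.Nonempty) :
    (S.toList.argmin f).getD d ∈ S ∧ ∀ o ∈ S, f ((S.toList.argmin f).getD d) ≤ f o := by
  cases h : S.toList.argmin f with
  | none =>
    rw [List.argmin_eq_none, Finset.toList_eq_nil] at h
    exact absurd h hS.ne_empty
  | some a =>
    have ha : a ∈ S.toList.argmin f := h
    refine ⟨Finset.mem_toList.1 (List.argmin_mem ha), fun o ho => ?_⟩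
    exact List.le_of_mem_argmin (Finset.mem_toList.2 ho) ha

lemma adjLarger_spec (σ : Fin n ≃ Fin n) {S : Finset (Fin n)} {o o' : Fin n}
    (ho' : o' ∈ S) (hlt : σ o < σ o') :
    adjLarger σ S o ∈ S ∧ σ o < σ (adjLarger σ S o) ∧
      ∀ a ∈ S, σ o < σ a → σ (adjLarger σ S o) ≤ σ a := by
  have h := argmin_getD_spec (S.filter (fun o' => σ o < σ o')) (fun o' => σ o') o
    ⟨o', by simp [ho', hlt]⟩
  obtain ⟨h1, h2⟩ := h
  rw [Finset.mem_filter] at h1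
  exact ⟨h1.1, h1.2, fun a ha hoa => h2 a (by simp [ha, hoa])⟩

variable [NeZero n]

lemma best_mem (p : Pref n) {S : Finset (Fin n)} {o : Fin n} (ho : o ∈ S) : best p S ∈ S :=
  (argmin_getD_spec S (fun o => p o) 0 ⟨o, ho⟩).1

lemma best_le (p : Pref n) {S : Finset (Fin n)} {o : Fin n} (ho : o ∈ S) :
    p (best p S) ≤ p o :=
  (argmin_getD_spec S (fun o => p o) 0 ⟨o, ho⟩).2 o ho

lemma mem_remObjs {st : AlgState n} {o : Fin n} :
    o ∈ remObjs st ↔ ∃ j, st.held j = some o := by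
  simp only [remObjs, remAgents, heldObj, Finset.mem_image, Finset.mem_filter, Finset.mem_univ,
    true_and]
  constructor
  · rintro ⟨j, hj, rfl⟩
    obtain ⟨x, hx⟩ := Option.isSome_iff_exists.1 hj
    exact ⟨j, by simp [hx]⟩
  · rintro ⟨j, hj⟩
    exact ⟨j, by simp [hj], by simp [hj]⟩

/-- Under a single-peaked preference an object strictly between two others is preferred to at
least one of them: to the left one if the peak is not to its left, else to the right one. -/
lemma sp_mid {σ : Fin n ≃ Fin n} {p : Pref n} (hp : singlePeaked σ p) {a b c : Fin n}
    (hab : σ a < σ b) (hbc : σ b < σ c) : p b < p a ∨ p b < p c := by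
  rcases lt_trichotomy (σ b) (σ (topObj p)) with h | h | h
  · exact Or.inl (hp b a (Or.inl ⟨hab, h⟩))
  · left
    have hb : b = topObj p := σ.injective h
    have h0 : p b = 0 := by rw [hb]; simp [topObj]
    have hne : p a ≠ p b := fun h' => hab.ne (congrArg σ (p.injective h'))
    rw [h0] at hne ⊢
    exact Fin.pos_iff_ne_zero.2 hne
  · exact Or.inr (hp b c (Or.inr ⟨h, hbc⟩))

/-- A null agent whose endowment is available has it as her best object. -/
lemma best_of_null {P : Fin n → Pref n} {j : Fin n} (hj : j ∉ activeAgents P)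
    {S : Finset (Fin n)} (hS : j ∈ S) : best (P j) S = j := by
  have ht : topObj (P j) = j := by simpa [activeAgents] using hj
  have h0 : P j j = 0 := by
    rw [topObj, Equiv.symm_apply_eq] at ht
    exact ht.symm
  have h := best_le (P j) hS
  rw [h0] at h
  apply (P j).injective
  rw [h0]
  exact le_antisymm h (Fin.zero_le _)

end Basics

/-! ### One step of the crawler -/

section Step

variable {n : ℕ} [NeZero n]

/-- Agent `l`, holding `x`, is the next to leave: `x` is smallest among the objects held by agents
whose best remaining object is weakly below what they hold. -/
structure Leaves (σ : Fin n ≃ Fin n) (P : Fin n → Pref n) (st : AlgState n)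
    (l x : Fin n) : Prop where
  leaver_eq : leaver σ P st = some l
  held_eq : st.held l = some x
  best_le : σ (best (P l) (remObjs st)) ≤ σ x
  min : ∀ j y, st.held j = some y → σ (best (P j) (remObjs st)) ≤ σ y → σ x ≤ σ y

/-- The holder of the largest remaining object is always entitled to leave, so somebody leaves as
long as anybody remains. -/
lemma exists_leaves (σ : Fin n ≃ Fin n) (P : Fin n → Pref n) (st : AlgState n)
    {i h : Fin n} (hi : st.held i = some h) : ∃ l x, Leaves σ P st l x := by
  have hne : (remObjs st).Nonempty := ⟨h, mem_remObjs.2 ⟨i, hi⟩⟩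
  obtain ⟨m, hm, hmax⟩ := Finset.exists_max_image (remObjs st) (fun o => σ o) hne
  obtain ⟨a, ha⟩ := mem_remObjs.1 hm
  have hbm := hmax _ (best_mem (P a) hm)
  set F := (remAgents st).filter
    (fun i => σ (best (P i) (remObjs st)) ≤ σ (heldObj st i)) with hF
  have hmem : ∀ a, a ∈ F ↔
      (st.held a).isSome = true ∧ σ (best (P a) (remObjs st)) ≤ σ (heldObj st a) := by
    intro a
    rw [hF, Finset.mem_filter, remAgents, Finset.mem_filter]
    simp
  have haF : a ∈ F := (hmem a).2 (by simpa [heldObj, ha] using hbm)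
  cases hl : leaver σ P st with
  | none =>
    have : F.toList = [] := List.argmin_eq_none.1 hl
    rw [Finset.toList_eq_nil] at this
    simp [this] at haF
  | some l =>
    have hlm : l ∈ F.toList.argmin (fun i => σ (heldObj st i)) := hl
    have hlF : l ∈ F := Finset.mem_toList.1 (List.argmin_mem hlm)
    rw [hmem] at hlF
    obtain ⟨x, hx⟩ := Option.isSome_iff_exists.1 hlF.1
    refine ⟨l, x, hl, hx, by simpa [heldObj, hx] using hlF.2, fun j y hj hb => ?_⟩
    have hjF : j ∈ F := (hmem j).2 (by simpa [heldObj, hj] using hb)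
    have := List.le_of_mem_argmin (Finset.mem_toList.2 hjF) hlm
    simpa [heldObj, hx, hj] using this

variable {σ : Fin n ≃ Fin n} {P : Fin n → Pref n} {st : AlgState n} {l x : Fin n}

lemma Leaves.mem (L : Leaves σ P st l x) : x ∈ remObjs st := mem_remObjs.2 ⟨l, L.held_eq⟩

lemma Leaves.step_held (L : Leaves σ P st l x) (j : Fin n) :
    (crawlerStep σ P st).held j =
      if j = l then none
      else if (st.held j).isSome = true ∧ σ (best (P l) (remObjs st)) ≤ σ (heldObj st j) ∧
          σ (heldObj st j) < σ x then
        some (adjLarger σ (remObjs st) (heldObj st j))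
      else st.held j := by
  have hx : heldObj st l = x := by simp [heldObj, L.held_eq]
  simp [crawlerStep, L.leaver_eq, hx]

lemma Leaves.step_res (L : Leaves σ P st l x) :
    (crawlerStep σ P st).res = Function.update st.res l (some (best (P l) (remObjs st))) := by
  simp [crawlerStep, L.leaver_eq]

/-- An agent who stays and is outside the crawling range keeps her object. -/
lemma Leaves.keep (L : Leaves σ P st l x) {j y : Fin n} (hj : st.held j = some y) (hjl : j ≠ l)
    (hout : σ (best (P l) (remObjs st)) ≤ σ y → ¬ σ y < σ x) :
    (crawlerStep σ P st).held j = some y := by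
  rw [L.step_held, if_neg hjl, if_neg, hj]
  rintro ⟨-, h1, h2⟩
  simp only [heldObj, hj, Option.getD_some] at h1 h2
  exact hout h1 h2

lemma Leaves.crawl (L : Leaves σ P st l x) {j y : Fin n} (hj : st.held j = some y)
    (h1 : σ (best (P l) (remObjs st)) ≤ σ y) (h2 : σ y < σ x) :
    (crawlerStep σ P st).held j = some (adjLarger σ (remObjs st) y) := by
  have hjl : j ≠ l := by
    rintro rfl
    rw [L.held_eq, Option.some.injEq] at hj
    exact absurd h2 (by simp [hj])
  rw [L.step_held, if_neg hjl, if_pos] <;> simp [heldObj, hj, h1, h2]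

/-- Whoever holds `z` after a step held it before, or crawled to it from the object `y` adjacently
below it, and then `z` is at most the leaver's object. -/
lemma Leaves.cases (L : Leaves σ P st l x) {j z : Fin n}
    (h : (crawlerStep σ P st).held j = some z) : j ≠ l ∧ (st.held j = some z ∨
      ∃ y, st.held j = some y ∧ σ y < σ x ∧ z ∈ remObjs st ∧ σ y < σ z ∧
        ∀ a ∈ remObjs st, σ y < σ a → σ z ≤ σ a) := by
  rw [L.step_held] at h
  split_ifs at h with h1 h2
  · refine ⟨h1, Or.inr ?_⟩
    obtain ⟨hs, -, hlt⟩ := h2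
    obtain ⟨y, hy⟩ := Option.isSome_iff_exists.1 hs
    simp only [heldObj, hy, Option.getD_some] at hlt h
    obtain ⟨a1, a2, a3⟩ := adjLarger_spec σ L.mem hlt
    rw [Option.some.injEq] at h
    rw [h] at a1 a2 a3
    exact ⟨y, hy, hlt, a1, a2, a3⟩
  · exact ⟨h1, Or.inl h⟩

lemma Leaves.remObjs_sub (L : Leaves σ P st l x) {j z : Fin n}
    (h : (crawlerStep σ P st).held j = some z) : z ∈ remObjs st := by
  obtain ⟨-, h | ⟨y, -, -, h, -⟩⟩ := L.cases h
  · exact mem_remObjs.2 ⟨j, h⟩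
  · exact h

lemma Leaves.card_lt (L : Leaves σ P st l x) :
    (remAgents (crawlerStep σ P st)).card < (remAgents st).card := by
  apply Finset.card_lt_card
  rw [Finset.ssubset_iff_of_subset]
  · exact ⟨l, by simp [remAgents, L.held_eq], by simp [remAgents, L.step_held]⟩
  · intro j hj
    simp only [remAgents, Finset.mem_filter, Finset.mem_univ, true_and] at hj ⊢
    obtain ⟨z, hz⟩ := Option.isSome_iff_exists.1 hj
    obtain ⟨-, h | ⟨y, h, -⟩⟩ := L.cases hz <;> simp [h]

/-- If an invariant holds initially and is kept by every step at which `i` does not leave, and it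
forces `i` to take `k` when she leaves, then the crawler assigns `k` to `i`. -/
lemma crawler_eq_of_invariant {i k : Fin n} (Inv : AlgState n → Prop)
    (h0 : Inv (crawlerInit n)) (hheld : ∀ st, Inv st → ∃ h, st.held i = some h)
    (hleave : ∀ st x, Inv st → Leaves σ P st i x → best (P i) (remObjs st) = k)
    (hstay : ∀ st l x, Inv st → Leaves σ P st l x → l ≠ i → Inv (crawlerStep σ P st)) :
    crawler σ P i = k := by
  have key : ∀ s : ℕ, (Inv ((crawlerStep σ P)^[s] (crawlerInit n)) ∧
      (remAgents ((crawlerStep σ P)^[s] (crawlerInit n))).card + s ≤ n) ∨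
      (((crawlerStep σ P)^[s] (crawlerInit n)).held i = none ∧
        ((crawlerStep σ P)^[s] (crawlerInit n)).res i = some k) := by
    intro s
    induction s with
    | zero =>
      refine Or.inl ⟨h0, ?_⟩
      simpa using Finset.card_le_univ (remAgents (crawlerInit n))
    | succ s ih =>
      rw [Function.iterate_succ_apply']
      set st := (crawlerStep σ P)^[s] (crawlerInit n)
      rcases ih with ⟨hI, hc⟩ | ⟨hn, hr⟩
      · obtain ⟨h, hh⟩ := hheld st hI
        obtain ⟨l, x, L⟩ := exists_leaves σ P st hh
        by_cases hl : l = i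
        · subst hl
          refine Or.inr ⟨by simp [L.step_held], ?_⟩
          rw [L.step_res, hleave st x hI L, Function.update_self]
        · have := L.card_lt
          exact Or.inl ⟨hstay st l x hI L hl, by omega⟩
      · right
        by_cases hex : ∃ j y, st.held j = some y
        · obtain ⟨j, y, hj⟩ := hex
          obtain ⟨l, x, L⟩ := exists_leaves σ P st hj
          have hl : i ≠ l := by
            rintro rfl
            have := L.held_eq
            simp [hn] at this
          refine ⟨by simp [L.step_held, hl, hn], ?_⟩
          rw [L.step_res, Function.update_of_ne hl, hr]
        · have hlv : leaver σ P st = none := by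
            have : remAgents st = ∅ := by
              ext j
              simp only [remAgents, Finset.mem_filter, Finset.mem_univ, true_and,
                Finset.notMem_empty, iff_false]
              intro hj
              obtain ⟨y, hy⟩ := Option.isSome_iff_exists.1 hj
              exact hex ⟨j, y, hy⟩
            simp [leaver, this]
          have : crawlerStep σ P st = st := by simp [crawlerStep, hlv]
          rw [this]
          exact ⟨hn, hr⟩
  rcases key n with ⟨hI, hc⟩ | ⟨-, hr⟩
  · obtain ⟨h, hh⟩ := hheld _ hI
    have hpos : 0 < (remAgents ((crawlerStep σ P)^[n] (crawlerInit n))).card :=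
      Finset.card_pos.2 ⟨i, by simp [remAgents, hh]⟩
    omega
  · simp [crawler, hr]

end Step

/-! ### The two invariants -/

section Invariants

variable {n : ℕ} [NeZero n] {σ : Fin n ≃ Fin n} {P : Fin n → Pref n} {st : AlgState n}
  {i k l x : Fin n}

/-- The state while `i` remains, when her favourite active object lies below `o_i`: she holds
`o_i`, everybody below holds her own endowment, and no active agent below has left. -/
structure InvLeft (σ : Fin n ≃ Fin n) (P : Fin n → Pref n) (i : Fin n) (st : AlgState n) :
    Prop where
  held : st.held i = some i
  uniq : ∀ j, st.held j = some i → j = i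
  own : ∀ j y, st.held j = some y → σ y < σ i → y = j
  act : ∀ a ∈ activeAgents P, σ a < σ i → st.held a = some a

/-- Agent `i` is always entitled to leave, since she prefers `k` below to everything above. -/
lemma InvLeft.best_lt (I : InvLeft σ P i st) (sp : singlePeaked σ (P i))
    (hkA : k ∈ activeAgents P) (hki : P i k < P i i) (hk : σ k < σ i) :
    σ (best (P i) (remObjs st)) < σ i := by
  have hkr : k ∈ remObjs st := mem_remObjs.2 ⟨k, I.act k hkA hk⟩
  have hb := best_le (P i) hkr
  by_contra hlt
  rcases (not_lt.1 hlt).lt_or_eq with h | h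
  · rcases sp_mid sp hk h with h' | h'
    · exact absurd hki h'.le.not_gt
    · exact absurd (h'.trans_le hb) hki.le.not_gt
  · rw [← σ.injective h] at hb
    exact absurd hki hb.not_gt

lemma InvLeft.leave (I : InvLeft σ P i st) (sp : singlePeaked σ (P i))
    (hkA : k ∈ activeAgents P) (hkb : ∀ a ∈ activeAgents P, P i k ≤ P i a)
    (hki : P i k < P i i) (hk : σ k < σ i) (L : Leaves σ P st i x) :
    best (P i) (remObjs st) = k := by
  have hkr : k ∈ remObjs st := mem_remObjs.2 ⟨k, I.act k hkA hk⟩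
  have hlt := I.best_lt sp hkA hki hk
  have hxi : x = i := by
    have := L.held_eq
    rw [I.held, Option.some.injEq] at this
    exact this.symm
  have hbr := best_mem (P i) hkr
  have hb := best_le (P i) hkr
  generalize best (P i) (remObjs st) = b at *
  obtain ⟨j, hj⟩ := mem_remObjs.1 hbr
  obtain rfl := I.own j b hj hlt
  -- A null owner of an object below `o_i` would leave before `i`.
  have hbA : b ∈ activeAgents P := by
    by_contra hn
    have := L.min b b hj (by rw [best_of_null hn hbr])
    rw [hxi] at this
    exact absurd hlt this.not_gt
  exact (P i).injective (le_antisymm hb (hkb b hbA))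

lemma InvLeft.stay (I : InvLeft σ P i st) (sp : ∀ j, singlePeaked σ (P j))
    (hkA : k ∈ activeAgents P) (hki : P i k < P i i) (hk : σ k < σ i)
    (hoth : ∀ j ∈ activeAgents P, j ≠ i → P j i < P j j)
    (L : Leaves σ P st l x) (hl : l ≠ i) : InvLeft σ P i (crawlerStep σ P st) := by
  have hir : i ∈ remObjs st := mem_remObjs.2 ⟨i, I.held⟩
  have hxi : σ x < σ i := by
    have h1 := L.min i i I.held (I.best_lt (sp i) hkA hki hk).le
    refine h1.lt_of_ne fun h => hl (I.uniq l ?_)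
    rw [← σ.injective h]; exact L.held_eq
  obtain rfl := I.own l x L.held_eq hxi
  -- An active agent below `i` prefers `o_i` to her own object and to everything below it.
  have hxA : x ∉ activeAgents P := by
    intro hA
    have h1 := hoth x hA hl
    have hb := best_le (P x) hir
    rcases L.best_le.lt_or_eq with h | h
    · rcases sp_mid (sp x) h hxi with h' | h'
      · exact absurd (hb.trans_lt h1) h'.le.not_gt
      · exact absurd h1 h'.le.not_gt
    · rw [σ.injective h] at hb
      exact absurd h1 hb.not_gt
  have hbx := best_of_null hxA L.mem
  have hkeep : ∀ j y, st.held j = some y → j ≠ x → (crawlerStep σ P st).held j = some y :=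
    fun j y hj hjx => L.keep hj hjx (by rw [hbx]; exact fun h => h.not_gt)
  have hback : ∀ j y, (crawlerStep σ P st).held j = some y → st.held j = some y := by
    intro j y hj
    obtain ⟨hjx, h | ⟨w, hw, -⟩⟩ := L.cases hj
    · exact h
    · have := hkeep j w hw hjx
      rw [hj] at this
      rw [hw, this]
  refine ⟨hkeep i i I.held hl.symm, fun j hj => I.uniq j (hback _ _ hj),
    fun j y hj => I.own j y (hback _ _ hj), fun a ha hai => hkeep a a (I.act a ha hai) ?_⟩
  rintro rfl
  exact hxA ha

/-- The state while `i` remains, when her favourite active object `k` lies above `o_i`: she is the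
only holder of an active object `h` with `i ≤ h ≤ k`, everybody above `h` holds her own endowment,
no active agent above `h` has left, and the null objects in `(i, h]` are gone. -/
structure InvRight (σ : Fin n ≃ Fin n) (P : Fin n → Pref n) (i k h : Fin n) (st : AlgState n) :
    Prop where
  held : st.held i = some h
  uniq : ∀ j, st.held j = some h → j = i
  hA : h ∈ activeAgents P
  ih : σ i ≤ σ h
  hk : σ h ≤ σ k
  own : ∀ j y, st.held j = some y → σ h < σ y → y = j
  act : ∀ a ∈ activeAgents P, σ h < σ a → st.held a = some a
  mid : ∀ j y, st.held j = some y → σ i < σ y → σ y ≤ σ h → y ∈ activeAgents P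

variable {h : Fin n}

lemma InvRight.k_mem (I : InvRight σ P i k h st) (hkA : k ∈ activeAgents P) :
    k ∈ remObjs st := by
  rcases I.hk.lt_or_eq with hlt | heq
  · exact mem_remObjs.2 ⟨k, I.act k hkA hlt⟩
  · rw [← σ.injective heq]; exact mem_remObjs.2 ⟨i, I.held⟩

/-- Everybody holding an object above `h` is entitled to leave: null agents want their endowment,
and active ones prefer `o_i` below it. -/
lemma InvRight.ready (I : InvRight σ P i k h st) (sp : ∀ j, singlePeaked σ (P j))
    (hoth : ∀ j ∈ activeAgents P, j ≠ i → P j i < P j j) {j y : Fin n}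
    (hj : st.held j = some y) (hy : σ h < σ y) : σ (best (P j) (remObjs st)) ≤ σ y := by
  obtain rfl := I.own j y hj hy
  have hyr : y ∈ remObjs st := mem_remObjs.2 ⟨y, hj⟩
  by_cases hA : y ∈ activeAgents P
  · have hiy : σ i < σ y := I.ih.trans_lt hy
    have h1 := hoth y hA (by rintro rfl; exact hiy.false)
    by_contra hlt
    rcases sp_mid (sp y) hiy (not_le.1 hlt) with h' | h'
    · exact absurd h1 h'.le.not_gt
    · exact absurd h' (best_le (P y) hyr).not_gt
  · rw [best_of_null hA hyr]

lemma InvRight.leave (I : InvRight σ P i k h st) (sp : singlePeaked σ (P i))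
    (hkA : k ∈ activeAgents P) (hkb : ∀ a ∈ activeAgents P, P i k ≤ P i a)
    (hki : P i k < P i i) (hik : σ i < σ k) (L : Leaves σ P st i x) :
    best (P i) (remObjs st) = k := by
  have hkr := I.k_mem hkA
  have hxh : x = h := by
    have := L.held_eq
    rw [I.held, Option.some.injEq] at this
    exact this.symm
  have hbh := L.best_le
  rw [hxh] at hbh
  have hbr := best_mem (P i) hkr
  have hb := best_le (P i) hkr
  generalize best (P i) (remObjs st) = b at *
  have hib : σ i < σ b := by
    by_contra hlt
    rcases (not_lt.1 hlt).lt_or_eq with h' | h'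
    · rcases sp_mid sp h' hik with h'' | h''
      · exact absurd (hb.trans_lt hki) h''.le.not_gt
      · exact absurd hki h''.le.not_gt
    · rw [σ.injective h'] at hb
      exact absurd hki hb.not_gt
  obtain ⟨j, hj⟩ := mem_remObjs.1 hbr
  exact (P i).injective (le_antisymm hb (hkb b (I.mid j b hj hib hbh)))

/-- A leaver from below `h` leaves everything from `h` on untouched. -/
lemma InvRight.stay_below (I : InvRight σ P i k h st) (L : Leaves σ P st l x) (hl : l ≠ i)
    (hxh : σ x < σ h) : InvRight σ P i k h (crawlerStep σ P st) := by
  -- Crawlers end at or below the leaver's object `x`, so holders of `h` or more did not crawl.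
  have hback : ∀ j y, (crawlerStep σ P st).held j = some y → σ h ≤ σ y → st.held j = some y := by
    intro j y hj hy
    obtain ⟨-, h' | ⟨w, -, hwx, -, -, hmin⟩⟩ := L.cases hj
    · exact h'
    · exact absurd (hmin x L.mem hwx) (hxh.trans_le hy).not_ge
  refine ⟨L.keep I.held hl.symm fun _ => hxh.le.not_gt, fun j hj => I.uniq j (hback j h hj le_rfl),
    I.hA, I.ih, I.hk, fun j y hj hy => I.own j y (hback j y hj hy.le) hy,
    fun a ha hha => L.keep (I.act a ha hha) ?_ fun _ => (hxh.trans hha).le.not_gt, ?_⟩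
  · rintro rfl
    have := L.held_eq
    rw [I.act a ha hha, Option.some.injEq] at this
    rw [this] at hha
    exact hxh.not_gt hha
  · intro j y hj h1 h2
    obtain ⟨j', hj'⟩ := mem_remObjs.1 (L.remObjs_sub hj)
    exact I.mid j' y hj' h1 h2

/-- A null leaver takes the object she holds, so nobody crawls. -/
lemma InvRight.stay_null (I : InvRight σ P i k h st) (L : Leaves σ P st x x) (hl : x ≠ i)
    (hxA : x ∉ activeAgents P) : InvRight σ P i k h (crawlerStep σ P st) := by
  have hbx := best_of_null hxA L.mem
  have hkeep : ∀ j y, st.held j = some y → j ≠ x → (crawlerStep σ P st).held j = some y :=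
    fun j y hj hjx => L.keep hj hjx (by rw [hbx]; exact fun h => h.not_gt)
  have hback : ∀ j y, (crawlerStep σ P st).held j = some y → st.held j = some y := by
    intro j y hj
    obtain ⟨hjx, h' | ⟨w, hw, -⟩⟩ := L.cases hj
    · exact h'
    · have := hkeep j w hw hjx
      rw [hj] at this
      rw [hw, this]
  refine ⟨hkeep i h I.held hl.symm, fun j hj => I.uniq j (hback _ _ hj), I.hA, I.ih, I.hk,
    fun j y hj => I.own j y (hback _ _ hj), fun a ha hai => hkeep a a (I.act a ha hai) ?_,
    fun j y hj => I.mid j y (hback _ _ hj)⟩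
  rintro rfl
  exact hxA ha

/-- An active leaver `x` from above `h` takes an object that is at most `h`, and `i` crawls from
`h` to `x`. -/
lemma InvRight.stay_active (I : InvRight σ P i k h st) (sp : ∀ j, singlePeaked σ (P j))
    (hkA : k ∈ activeAgents P) (hkb : ∀ a ∈ activeAgents P, P i k ≤ P i a)
    (hoth : ∀ j ∈ activeAgents P, j ≠ i → ∀ a ∈ activeAgents P, P j i ≤ P j a)
    (hoth' : ∀ j ∈ activeAgents P, j ≠ i → P j i < P j j)
    (L : Leaves σ P st x x) (hl : x ≠ i) (hhx : σ h < σ x) (hxA : x ∈ activeAgents P) :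
    InvRight σ P i k x (crawlerStep σ P st) := by
  have hhr : h ∈ remObjs st := mem_remObjs.2 ⟨i, I.held⟩
  have hxmin : ∀ y ∈ remObjs st, σ h < σ y → σ x ≤ σ y := by
    intro y hy hhy
    obtain ⟨j, hj⟩ := mem_remObjs.1 hy
    exact L.min j y hj (I.ready sp hoth' hj hhy)
  have hpx : P x h < P x x := by
    rcases I.ih.lt_or_eq with hlt | heq
    · rcases sp_mid (sp x) hlt hhx with h' | h'
      · exact absurd h' (hoth x hxA hl h I.hA).not_gt
      · exact h'
    · rw [← σ.injective heq]; exact hoth' x hxA hl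
  have hth : σ (best (P x) (remObjs st)) ≤ σ h := by
    by_contra hlt
    have h1 := hxmin _ (best_mem (P x) hhr) (not_le.1 hlt)
    have h2 := σ.injective (le_antisymm L.best_le h1)
    have h3 := best_le (P x) hhr
    rw [h2] at h3
    exact absurd hpx h3.not_gt
  have hxk : σ x ≤ σ k := by
    rcases I.hk.lt_or_eq with hlt | heq
    · exact hxmin k (I.k_mem hkA) hlt
    · -- If `i` already held `k`, her best remaining object would not be above it.
      exfalso
      obtain rfl := σ.injective heq
      have hbk : σ h < σ (best (P i) (remObjs st)) := by
        by_contra hlt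
        exact absurd (L.min i h I.held (not_lt.1 hlt)) hhx.not_ge
      have hxb := hxmin _ (best_mem (P i) hhr) hbk
      rcases hxb.lt_or_eq with hlt | heq'
      · rcases sp_mid (sp i) hhx hlt with h' | h'
        · exact absurd h' (hkb x hxA).not_gt
        · exact absurd h' (best_le (P i) L.mem).not_gt
      · have h1 := best_le (P i) hhr
        rw [← σ.injective heq'] at h1
        have h2 := (P i).injective (le_antisymm h1 (hkb x hxA))
        rw [h2] at hhx
        exact hhx.false
  have hadj : adjLarger σ (remObjs st) h = x := by
    obtain ⟨a1, a2, a3⟩ := adjLarger_spec σ L.mem hhx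
    exact σ.injective (le_antisymm (a3 x L.mem hhx) (hxmin _ a1 a2))
  refine ⟨by rw [L.crawl I.held hth hhx, hadj], ?_, hxA, I.ih.trans hhx.le, hxk, ?_, ?_, ?_⟩
  · intro j hj
    obtain ⟨hjx, h' | ⟨w, hw, hwx, -, -, hmin⟩⟩ := L.cases hj
    · exact absurd (I.own j x h' hhx).symm hjx
    · apply I.uniq j
      rcases lt_trichotomy (σ w) (σ h) with h1 | h1 | h1
      · exact absurd (hmin h hhr h1) hhx.not_ge
      · rw [hw, σ.injective h1]
      · exact absurd (hxmin w (mem_remObjs.2 ⟨j, hw⟩) h1) hwx.not_ge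
  · intro j y hj hy
    obtain ⟨-, h' | ⟨w, -, hwx, -, -, hmin⟩⟩ := L.cases hj
    · exact I.own j y h' (hhx.trans hy)
    · exact absurd (hmin x L.mem hwx) hy.not_ge
  · intro a ha hxa
    refine L.keep (I.act a ha (hhx.trans hxa)) ?_ fun _ => hxa.le.not_gt
    rintro rfl
    exact hxa.false
  · intro j y hj h1 h2
    have hyr := L.remObjs_sub hj
    rcases le_or_gt (σ y) (σ h) with h3 | h3
    · obtain ⟨j', hj'⟩ := mem_remObjs.1 hyr
      exact I.mid j' y hj' h1 h3
    · rw [σ.injective (le_antisymm h2 (hxmin y hyr h3))]; exact hxA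

end Invariants

/-! ### Equity under unanimous acclaim -/

theorem crawler_equityUA (n : ℕ) [NeZero n] (hn : 3 ≤ n) (σ : Fin n ≃ Fin n)
    (D : Set (Pref n)) (hD : D ⊆ spDomain σ) :
    ∀ P : Fin n → Pref n, inD D P → ∀ i, acclaimed P i →
      crawler σ P i = best (P i) (activeAgents P) := by
  intro P hP i hacc
  obtain ⟨-, hiA, hne, hall⟩ := hacc
  have sp : ∀ j, singlePeaked σ (P j) := fun j => hD (hP j)
  have hkA := best_mem (P i) hiA
  have hkb : ∀ a ∈ activeAgents P, P i (best (P i) (activeAgents P)) ≤ P i a :=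
    fun a ha => best_le (P i) ha
  generalize best (P i) (activeAgents P) = k at *
  have hki : P i k < P i i := (hkb i hiA).lt_of_ne fun h => hne ((P i).injective h)
  have hoth : ∀ j ∈ activeAgents P, j ≠ i → ∀ a ∈ activeAgents P, P j i ≤ P j a := by
    intro j hj hji a ha
    have := best_le (P j) ha
    rwa [hall j hj hji] at this
  have hoth' : ∀ j ∈ activeAgents P, j ≠ i → P j i < P j j := fun j hj hji =>
    (hoth j hj hji j hj).lt_of_ne fun h => hji ((P j).injective h).symm
  have hinit : ∀ j y, (crawlerInit n).held j = some y → y = j := by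
    intro j y h
    simpa [crawlerInit, eq_comm] using h
  rcases lt_trichotomy (σ k) (σ i) with hlt | heq | hlt
  · exact crawler_eq_of_invariant (InvLeft σ P i)
      ⟨rfl, fun j hj => (hinit j i hj).symm, fun j y hj _ => hinit j y hj, fun _ _ _ => rfl⟩
      (fun st I => ⟨i, I.held⟩)
      (fun st x I L => I.leave (sp i) hkA hkb hki hlt L)
      (fun st l x I L hl => I.stay sp hkA hki hlt hoth' L hl)
  · exact absurd (σ.injective heq) hne
  · refine crawler_eq_of_invariant (fun st => ∃ h, InvRight σ P i k h st)
      ⟨i, rfl, fun j hj => (hinit j i hj).symm, hiA, le_rfl, hlt.le,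
        fun j y hj _ => hinit j y hj, fun _ _ _ => rfl,
        fun j y _ h1 h2 => absurd h1 h2.not_gt⟩
      (fun st ⟨h, I⟩ => ⟨h, I.held⟩)
      (fun st x ⟨h, I⟩ L => I.leave (sp i) hkA hkb hki hlt L) ?_
    rintro st l x ⟨h, I⟩ L hl
    rcases lt_trichotomy (σ x) (σ h) with hx | hx | hx
    · exact ⟨h, I.stay_below L hl hx⟩
    · refine absurd (I.uniq l ?_) hl
      rw [← σ.injective hx]; exact L.held_eq
    · obtain rfl := I.own l x L.held_eq hx
      by_cases hxA : x ∈ activeAgents P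
      · exact ⟨x, I.stay_active sp hkA hkb hoth hoth' L hl hx hxA⟩
      · exact ⟨h, I.stay_null L hl hxA⟩
end
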